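/- arXiv:2512.22696 — 3 statements merged into one kernel-verified Lean document; each statement's English description precedes it below -/
import Mathlib

section
/- Let a, b, c be pairwise coprime positive integers with c² = a² + b² + ab. Then for every integer m with m > bc − b − c, the triangle with side lengths (a·(a+2b)·m, b·(b+2a)·m, c²·m) tiles into (a+2b)·(b+2a)·m² congruent copies of the triangle with side lengths (a, b, c). -/
noncomputable section

abbrev Plane := EuclideanSpace ℝ (Fin 2)

/-- The point (x, y) in the Euclidean plane. -/
def pt (x y : ℝ) : Plane := (WithLp.equiv 2 (Fin 2 → ℝ)).symm ![x, y]

/-- `Δ` is a triangle with side lengths `(p, q, r)`: the convex hull of points `P, Q, R`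
with `dist Q R = p`, `dist P R = q`, `dist P Q = r`. -/
def IsTriangle (p q r : ℝ) (Δ : Set Plane) : Prop :=
  ∃ P Q R : Plane, dist Q R = p ∧ dist P R = q ∧ dist P Q = r ∧
    Δ = convexHull ℝ {P, Q, R}

/-- `S` tiles into `N` congruent copies of the `(p, q, r)` triangle: there are isometries
`f 1, …, f N` of the plane and a triangle `Δ` with side lengths `(p, q, r)` such that
`S` is the union of the `f i '' Δ` and their interiors are pairwise disjoint. -/
def TilesInto (S : Set Plane) (N : ℕ) (p q r : ℝ) : Prop :=
  ∃ (f : Fin N → Plane ≃ᵢ Plane) (Δ : Set Plane),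
    IsTriangle p q r Δ ∧
    S = ⋃ i, f i '' Δ ∧
    ∀ i j : Fin N, i ≠ j → interior (f i '' Δ) ∩ interior (f j '' Δ) = ∅

open MeasureTheory

namespace TT

def qf (p : ℝ × ℝ) : ℝ := p.1 ^ 2 + p.1 * p.2 + p.2 ^ 2

/-- frame map -/
def fr {E : Type*} [AddCommGroup E] [Module ℝ E] (O u v : E) : (ℝ × ℝ) →ᵃ[ℝ] E :=
  ((LinearMap.fst ℝ ℝ ℝ).smulRight u + (LinearMap.snd ℝ ℝ ℝ).smulRight v).toAffineMap
    + AffineMap.const ℝ _ O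

theorem fr_apply {E : Type*} [AddCommGroup E] [Module ℝ E] (O u v : E) (p : ℝ × ℝ) :
    fr O u v p = p.1 • u + p.2 • v + O := by
  simp [fr]

theorem null_line (α β γ : ℝ) (h : α ≠ 0 ∨ β ≠ 0) :
    volume {p : ℝ × ℝ | α * p.1 + β * p.2 = γ} = 0 := by
  rw [Measure.volume_eq_prod]
  have hm : MeasurableSet {p : ℝ × ℝ | α * p.1 + β * p.2 = γ} :=
    measurableSet_eq_fun (by fun_prop) (by fun_prop)
  by_cases hβ : β = 0
  · have hα : α ≠ 0 := by tauto
    have : {p : ℝ × ℝ | α * p.1 + β * p.2 = γ} ⊆ ({γ / α} : Set ℝ) ×ˢ Set.univ := by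
      rintro ⟨x, y⟩ hxy
      simp only [Set.mem_ofPred_eq, hβ] at hxy
      simp only [Set.mem_prod, Set.mem_singleton_iff, Set.mem_univ, and_true]
      field_simp
      linarith
    refine measure_mono_null this ?_
    rw [Measure.prod_prod]
    simp
  · rw [Measure.measure_prod_null hm]
    refine Filter.Eventually.of_forall fun x => ?_
    have : (Prod.mk x ⁻¹' {p : ℝ × ℝ | α * p.1 + β * p.2 = γ}) ⊆ {(γ - α * x) / β} := by
      intro y hy
      simp only [Set.mem_preimage, Set.mem_ofPred_eq] at hy
      simp only [Set.mem_singleton_iff]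
      field_simp
      linarith
    exact measure_mono_null this (by simp)

theorem hull_gen {E : Type*} [AddCommGroup E] [Module ℝ E] (P Q R X : E) :
    X ∈ convexHull ℝ {P, Q, R} ↔
    ∃ r s t : ℝ, 0 ≤ r ∧ 0 ≤ s ∧ 0 ≤ t ∧ r + s + t = 1 ∧ r • P + s • Q + t • R = X := by
  rw [convexHull_insert (Set.insert_nonempty _ _), convexHull_pair]
  simp only [convexJoin_singleton_left, Set.mem_iUnion, segment, Set.mem_ofPred_eq, exists_prop]
  constructor
  · rintro ⟨Y, ⟨p, q, hp, hq, hpq, rfl⟩, r, s, hr, hs, hrs, rfl⟩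
    refine ⟨r, s * p, s * q, hr, by positivity, by positivity, ?_, ?_⟩
    · rw [add_assoc, ← mul_add, hpq, mul_one, hrs]
    · rw [smul_add, smul_smul, smul_smul, add_assoc]
  · rintro ⟨r, s, t, hr, hs, ht, h1, rfl⟩
    rcases eq_or_lt_of_le (add_nonneg hs ht) with h0 | h0
    · have hs0 : s = 0 := by linarith
      have ht0 : t = 0 := by linarith
      refine ⟨Q, ⟨1, 0, by simp, by simp, by simp, by simp⟩, r, 0, hr, le_rfl, by linarith, ?_⟩
      simp [hs0, ht0]
    · refine ⟨(s/(s+t)) • Q + (t/(s+t)) • R, ⟨s/(s+t), t/(s+t), by positivity, by positivity,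
        by field_simp, rfl⟩, r, s + t, hr, h0.le, by linarith, ?_⟩
      rw [smul_add, smul_smul, smul_smul, add_assoc]
      congr 3 <;> field_simp

def cr (P Q X : ℝ × ℝ) : ℝ := (Q.1 - P.1) * (X.2 - P.2) - (Q.2 - P.2) * (X.1 - P.1)

theorem hull_ineq (P Q R X : ℝ × ℝ) (h : 0 < cr P Q R) :
    X ∈ convexHull ℝ {P, Q, R} ↔ 0 ≤ cr P Q X ∧ 0 ≤ cr Q R X ∧ 0 ≤ cr R P X := by
  rw [hull_gen]
  constructor
  · rintro ⟨r, s, t, hr, hs, ht, h1, rfl⟩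
    have hr' : r = 1 - s - t := by linarith
    refine ⟨?_, ?_, ?_⟩
    · have : cr P Q (r • P + s • Q + t • R) = t * cr P Q R := by
        subst hr'; simp [cr]; ring
      rw [this]; positivity
    · have : cr Q R (r • P + s • Q + t • R) = r * cr P Q R := by
        subst hr'; simp [cr]; ring
      rw [this]; positivity
    · have : cr R P (r • P + s • Q + t • R) = s * cr P Q R := by
        subst hr'; simp [cr]; ring
      rw [this]; positivity
  · rintro ⟨h1, h2, h3⟩
    refine ⟨cr Q R X / cr P Q R, cr R P X / cr P Q R, cr P Q X / cr P Q R, by positivity,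
      by positivity, by positivity, ?_, ?_⟩
    · field_simp
      simp [cr]; ring
    · have h0 := h.ne'
      ext
      · simp only [Prod.fst_add, Prod.smul_fst, smul_eq_mul]
        field_simp
        simp [cr]; ring
      · simp only [Prod.snd_add, Prod.smul_snd, smul_eq_mul]
        field_simp
        simp [cr]; ring

def Til (a b c : ℝ) (D : Set (ℝ × ℝ)) (A : ℝ) : Prop :=
  ∃ (ι : Type) (_ : Fintype ι) (P Q R : ι → ℝ × ℝ),
    (∀ i, qf (Q i - R i) = a ^ 2 ∧ qf (P i - R i) = b ^ 2 ∧ qf (P i - Q i) = c ^ 2) ∧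
    D = (⋃ i, convexHull ℝ {P i, Q i, R i}) ∧
    (∀ i j, i ≠ j →
      volume (convexHull ℝ {P i, Q i, R i} ∩ convexHull ℝ {P j, Q j, R j}) = 0) ∧
    (Fintype.card ι : ℝ) * (a * b) = A

variable {a b c : ℝ}

theorem til_tile (P Q R : ℝ × ℝ) (h1 : qf (Q - R) = a ^ 2) (h2 : qf (P - R) = b ^ 2)
    (h3 : qf (P - Q) = c ^ 2) : Til a b c (convexHull ℝ {P, Q, R}) (a * b) := by
  refine ⟨Unit, inferInstance, fun _ => P, fun _ => Q, fun _ => R, fun _ => ⟨h1, h2, h3⟩, ?_, ?_, ?_⟩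
  · rw [Set.iUnion_const]
  · intro i j hij; exact absurd (Subsingleton.elim i j) hij
  · simp

theorem til_empty : Til a b c ∅ 0 := by
  refine ⟨Empty, inferInstance, fun _ => 0, fun _ => 0, fun _ => 0, fun i => i.elim, ?_, ?_, ?_⟩
  · simp
  · intro i; exact i.elim
  · simp

theorem til_union {D₁ D₂ : Set (ℝ × ℝ)} {A₁ A₂ : ℝ} (h₁ : Til a b c D₁ A₁) (h₂ : Til a b c D₂ A₂)
    (h : volume (D₁ ∩ D₂) = 0) : Til a b c (D₁ ∪ D₂) (A₁ + A₂) := by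
  obtain ⟨ι, _, P, Q, R, hq, hD, hn, hc⟩ := h₁
  obtain ⟨κ, _, P', Q', R', hq', hD', hn', hc'⟩ := h₂
  refine ⟨ι ⊕ κ, inferInstance, Sum.elim P P', Sum.elim Q Q', Sum.elim R R', ?_, ?_, ?_, ?_⟩
  · rintro (i | i)
    · exact hq i
    · exact hq' i
  · rw [hD, hD', Set.iUnion_sum]; rfl
  · rintro (i | i) (j | j) hij
    · exact hn i j (by simpa using hij)
    · refine measure_mono_null (Set.inter_subset_inter ?_ ?_) h
      · rw [hD]; exact Set.subset_iUnion (fun i => convexHull ℝ {P i, Q i, R i}) i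
      · rw [hD']; exact Set.subset_iUnion (fun i => convexHull ℝ {P' i, Q' i, R' i}) j
    · rw [Set.inter_comm]
      refine measure_mono_null (Set.inter_subset_inter ?_ ?_) h
      · rw [hD]; exact Set.subset_iUnion (fun i => convexHull ℝ {P i, Q i, R i}) j
      · rw [hD']; exact Set.subset_iUnion (fun i => convexHull ℝ {P' i, Q' i, R' i}) i
    · exact hn' i j (by simpa using hij)
  · rw [Fintype.card_sum, ← hc, ← hc']; push_cast; ring

theorem null_image (g : (ℝ × ℝ) →ᵃ[ℝ] (ℝ × ℝ)) {s : Set (ℝ × ℝ)} (h : volume s = 0) :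
    volume (g '' s) = 0 := by
  refine addHaar_image_eq_zero_of_differentiableOn_of_addHaar_eq_zero volume ?_ h
  have : Continuous g := AffineMap.continuous_of_finiteDimensional g
  exact (ContinuousAffineMap.differentiable ⟨g, this⟩).differentiableOn

theorem til_map (g : (ℝ × ℝ) →ᵃ[ℝ] (ℝ × ℝ)) (hg : ∀ x y, qf (g x - g y) = qf (x - y))
    {D : Set (ℝ × ℝ)} {A : ℝ} (h : Til a b c D A) : Til a b c (g '' D) A := by
  have hinj : Function.Injective g := by
    intro x y hxy
    have := hg x y
    rw [hxy] at this
    simp only [qf, sub_self, Prod.fst_zero, Prod.snd_zero, Prod.fst_sub, Prod.snd_sub] at this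
    have h1 : x.1 - y.1 = 0 := by nlinarith [sq_nonneg (x.1 - y.1 + 2 * (x.2 - y.2)), sq_nonneg (x.1 - y.1)]
    have h2 : x.2 - y.2 = 0 := by rw [h1] at this; nlinarith
    ext <;> linarith
  obtain ⟨ι, _, P, Q, R, hq, hD, hn, hc⟩ := h
  have himg : ∀ i, convexHull ℝ {g (P i), g (Q i), g (R i)} = g '' convexHull ℝ {P i, Q i, R i} := by
    intro i
    rw [AffineMap.image_convexHull, Set.image_insert_eq, Set.image_pair]
  refine ⟨ι, inferInstance, fun i => g (P i), fun i => g (Q i), fun i => g (R i), ?_, ?_, ?_, hc⟩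
  · intro i; simp only [hg]; exact hq i
  · rw [hD, Set.image_iUnion]; simp only [himg]
  · intro i j hij
    rw [himg, himg, ← Set.image_inter hinj]
    exact null_image g (hn i j hij)

/-- gluing inside a frame -/
theorem til_glue (g : (ℝ × ℝ) →ᵃ[ℝ] (ℝ × ℝ)) (hg : Function.Injective g)
    {D D₁ D₂ : Set (ℝ × ℝ)} {A A₁ A₂ : ℝ}
    (h₁ : Til a b c (g '' D₁) A₁) (h₂ : Til a b c (g '' D₂) A₂)
    (α β γ : ℝ) (h0 : α ≠ 0 ∨ β ≠ 0)
    (h : ∀ p ∈ D₁, p ∈ D₂ → α * p.1 + β * p.2 = γ)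
    (hD : ∀ p, p ∈ D ↔ p ∈ D₁ ∨ p ∈ D₂) (hA : A = A₁ + A₂) : Til a b c (g '' D) A := by
  have : D = D₁ ∪ D₂ := Set.ext hD
  rw [this, Set.image_union, hA]
  refine til_union h₁ h₂ ?_
  rw [← Set.image_inter hg]
  refine null_image g (measure_mono_null ?_ (null_line α β γ h0))
  rintro p ⟨hp1, hp2⟩
  exact h p hp1 hp2

theorem til_glue' {D D₁ D₂ : Set (ℝ × ℝ)} {A A₁ A₂ : ℝ}
    (h₁ : Til a b c D₁ A₁) (h₂ : Til a b c D₂ A₂)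
    (α β γ : ℝ) (h0 : α ≠ 0 ∨ β ≠ 0)
    (h : ∀ p ∈ D₁, p ∈ D₂ → α * p.1 + β * p.2 = γ)
    (hD : ∀ p, p ∈ D ↔ p ∈ D₁ ∨ p ∈ D₂) (hA : A = A₁ + A₂) : Til a b c D A := by
  have := til_glue (a := a) (b := b) (c := c) (AffineMap.id ℝ (ℝ × ℝ)) Function.injective_id
    (D := D) (D₁ := D₁) (D₂ := D₂) (A := A) (by simpa using h₁) (by simpa using h₂) α β γ h0 h hD hA
  simpa using this

theorem cell_up (u v : ℝ × ℝ) (O : ℝ × ℝ) (h1 : qf v = a ^ 2) (h2 : qf u = b ^ 2)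
    (h3 : qf (u - v) = c ^ 2) (i j : ℝ) :
    Til a b c (fr O u v '' {p | i ≤ p.1 ∧ j ≤ p.2 ∧ p.1 + p.2 ≤ i + j + 1}) (a * b) := by
  have : {p : ℝ × ℝ | i ≤ p.1 ∧ j ≤ p.2 ∧ p.1 + p.2 ≤ i + j + 1}
      = convexHull ℝ {((i + 1, j) : ℝ × ℝ), (i, j + 1), (i, j)} := by
    ext p
    rw [hull_ineq _ _ _ _ (by simp [cr])]
    simp only [cr, Set.mem_ofPred_eq]
    constructor
    · rintro ⟨_, _, _⟩; refine ⟨?_, ?_, ?_⟩ <;> linarith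
    · rintro ⟨_, _, _⟩; refine ⟨?_, ?_, ?_⟩ <;> linarith
  rw [this, AffineMap.image_convexHull, Set.image_insert_eq, Set.image_pair]
  refine til_tile _ _ _ ?_ ?_ ?_
  · rw [← h1]; congr 1; simp only [fr_apply]; module
  · rw [← h2]; congr 1; simp only [fr_apply]; module
  · rw [← h3]; congr 1; simp only [fr_apply]; module

theorem qf_neg (p : ℝ × ℝ) : qf (-p) = qf p := by simp [qf]

theorem cell_down (u v : ℝ × ℝ) (O : ℝ × ℝ) (h1 : qf v = a ^ 2) (h2 : qf u = b ^ 2)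
    (h3 : qf (u - v) = c ^ 2) (i j : ℝ) :
    Til a b c (fr O u v '' {p | p.1 ≤ i + 1 ∧ p.2 ≤ j + 1 ∧ i + j + 1 ≤ p.1 + p.2}) (a * b) := by
  have : {p : ℝ × ℝ | p.1 ≤ i + 1 ∧ p.2 ≤ j + 1 ∧ i + j + 1 ≤ p.1 + p.2}
      = convexHull ℝ {((i, j + 1) : ℝ × ℝ), (i + 1, j), (i + 1, j + 1)} := by
    ext p
    rw [hull_ineq _ _ _ _ (by simp [cr])]
    simp only [cr, Set.mem_ofPred_eq]
    constructor
    · rintro ⟨_, _, _⟩; refine ⟨?_, ?_, ?_⟩ <;> linarith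
    · rintro ⟨_, _, _⟩; refine ⟨?_, ?_, ?_⟩ <;> linarith
  rw [this, AffineMap.image_convexHull, Set.image_insert_eq, Set.image_pair]
  refine til_tile _ _ _ ?_ ?_ ?_
  · rw [← h1, ← qf_neg v]; congr 1; simp only [fr_apply]; module
  · rw [← h2, ← qf_neg u]; congr 1; simp only [fr_apply]; module
  · rw [← h3, ← qf_neg (u - v)]; congr 1; simp only [fr_apply]; module

theorem fr_inj (O u v : ℝ × ℝ) (hd : u.1 * v.2 - u.2 * v.1 ≠ 0) :
    Function.Injective (fr O u v) := by
  intro p p' h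
  simp only [fr_apply] at h
  have e1 := congrArg Prod.fst h
  have e2 := congrArg Prod.snd h
  simp only [Prod.fst_add, Prod.snd_add, Prod.smul_fst, Prod.smul_snd, smul_eq_mul] at e1 e2
  have h1 : (p.1 - p'.1) * (u.1 * v.2 - u.2 * v.1) = 0 := by
    linear_combination v.2 * e1 - v.1 * e2
  have h2 : (p.2 - p'.2) * (u.1 * v.2 - u.2 * v.1) = 0 := by
    linear_combination u.1 * e2 - u.2 * e1
  have h1' := (mul_eq_zero.mp h1).resolve_right hd
  have h2' := (mul_eq_zero.mp h2).resolve_right hd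
  ext <;> linarith

theorem fr_det (ha : 0 < a) (hb : 0 < b) (hc : c ^ 2 = a ^ 2 + b ^ 2 + a * b)
    (u v : ℝ × ℝ) (h1 : qf v = a ^ 2) (h2 : qf u = b ^ 2)
    (h3 : qf (u - v) = c ^ 2) : u.1 * v.2 - u.2 * v.1 ≠ 0 := by
  intro h
  have key : 3 * (u.1 * v.2 - u.2 * v.1) ^ 2
      = 4 * qf u * qf v - (qf u + qf v - qf (u - v)) ^ 2 := by
    simp only [qf, Prod.fst_sub, Prod.snd_sub]; ring
  rw [h, h1, h2, h3, hc] at key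
  have : 0 < a ^ 2 * b ^ 2 := by positivity
  nlinarith

section grid
variable (ha : 0 < a) (hb : 0 < b) (hc : c ^ 2 = a ^ 2 + b ^ 2 + a * b)
    (O u v : ℝ × ℝ) (h1 : qf v = a ^ 2) (h2 : qf u = b ^ 2) (h3 : qf (u - v) = c ^ 2)
include ha hb hc h1 h2 h3

theorem cell_sq (i j : ℝ) :
    Til a b c (fr O u v '' {p | i ≤ p.1 ∧ p.1 ≤ i + 1 ∧ j ≤ p.2 ∧ p.2 ≤ j + 1}) (2 * (a * b)) := by
  refine til_glue _ (fr_inj O u v (fr_det ha hb hc u v h1 h2 h3))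
    (cell_up u v O h1 h2 h3 i j) (cell_down u v O h1 h2 h3 i j) 1 1 (i + j + 1) (by simp) ?_ ?_ (by ring)
  · rintro p ⟨_, _, _⟩ ⟨_, _, _⟩; linarith
  · intro p
    simp only [Set.mem_ofPred_eq]
    constructor
    · rintro ⟨_, _, _, _⟩
      rcases le_total (p.1 + p.2) (i + j + 1) with h | h
      · left; refine ⟨?_, ?_, ?_⟩ <;> linarith
      · right; refine ⟨?_, ?_, ?_⟩ <;> linarith
    · rintro (⟨_, _, _⟩ | ⟨_, _, _⟩) <;> refine ⟨?_, ?_, ?_, ?_⟩ <;> linarith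

theorem row (j : ℝ) (n : ℕ) :
    Til a b c (fr O u v '' {p | 0 ≤ p.1 ∧ p.1 ≤ n + 1 ∧ j ≤ p.2 ∧ p.2 ≤ j + 1})
      (2 * (n + 1) * (a * b)) := by
  induction n with
  | zero => simpa using cell_sq ha hb hc O u v h1 h2 h3 0 j
  | succ n ih =>
    refine til_glue _ (fr_inj O u v (fr_det ha hb hc u v h1 h2 h3))
      ih (cell_sq ha hb hc O u v h1 h2 h3 (n + 1) j) 1 0 (n + 1) (by simp) ?_ ?_ (by push_cast; ring)
    · rintro p ⟨_, _, _⟩ ⟨_, _, _⟩; linarith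
    · intro p
      have hn : (0 : ℝ) ≤ n := Nat.cast_nonneg n
      push_cast
      simp only [Set.mem_ofPred_eq]
      constructor
      · rintro ⟨_, _, _, _⟩
        rcases le_total p.1 (n + 1) with h | h
        · left; refine ⟨?_, ?_, ?_, ?_⟩ <;> linarith
        · right; refine ⟨?_, ?_, ?_, ?_⟩ <;> linarith
      · rintro (⟨_, _, _, _⟩ | ⟨_, _, _, _⟩) <;> refine ⟨?_, ?_, ?_, ?_⟩ <;> linarith

theorem para (n k : ℕ) :
    Til a b c (fr O u v '' {p | 0 ≤ p.1 ∧ p.1 ≤ n + 1 ∧ 0 ≤ p.2 ∧ p.2 ≤ k + 1})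
      (2 * (n + 1) * (k + 1) * (a * b)) := by
  induction k with
  | zero => simpa using row ha hb hc O u v h1 h2 h3 0 n
  | succ k ih =>
    refine til_glue _ (fr_inj O u v (fr_det ha hb hc u v h1 h2 h3))
      ih (row ha hb hc O u v h1 h2 h3 (k + 1) n) 0 1 (k + 1) (by simp) ?_ ?_ (by push_cast; ring)
    · rintro p ⟨_, _, _⟩ ⟨_, _, _⟩; linarith
    · intro p
      have hn : (0 : ℝ) ≤ k := Nat.cast_nonneg k
      push_cast
      simp only [Set.mem_ofPred_eq]
      constructor
      · rintro ⟨_, _, _, _⟩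
        rcases le_total p.2 (k + 1) with h | h
        · left; refine ⟨?_, ?_, ?_, ?_⟩ <;> linarith
        · right; refine ⟨?_, ?_, ?_, ?_⟩ <;> linarith
      · rintro (⟨_, _, _, _⟩ | ⟨_, _, _, _⟩) <;> refine ⟨?_, ?_, ?_, ?_⟩ <;> linarith

theorem triN (n : ℕ) : ∀ j : ℝ,
    Til a b c (fr O u v '' {p | 0 ≤ p.1 ∧ j ≤ p.2 ∧ p.1 + p.2 ≤ j + n + 1})
      ((n + 1) ^ 2 * (a * b)) := by
  induction n with
  | zero => intro j; simpa using cell_up u v O h1 h2 h3 0 j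
  | succ n ih =>
    intro j
    have inj := fr_inj O u v (fr_det ha hb hc u v h1 h2 h3)
    have hn : (0 : ℝ) ≤ n := Nat.cast_nonneg n
    have bottom : Til a b c (fr O u v '' {p | 0 ≤ p.1 ∧ j ≤ p.2 ∧ p.2 ≤ j + 1 ∧
        p.1 + p.2 ≤ j + n + 2}) ((2 * (n + 1) + 1) * (a * b)) := by
      refine til_glue _ inj (row ha hb hc O u v h1 h2 h3 j n)
        (cell_up u v O h1 h2 h3 (n + 1) j) 1 0 (n + 1) (by simp) ?_ ?_ (by ring)
      · rintro p ⟨_, _, _, _⟩ ⟨_, _, _⟩; linarith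
      · intro p
        simp only [Set.mem_ofPred_eq]
        constructor
        · rintro ⟨_, _, _, _⟩
          rcases le_total p.1 (n + 1) with h | h
          · left; refine ⟨?_, ?_, ?_, ?_⟩ <;> linarith
          · right; refine ⟨?_, ?_, ?_⟩ <;> linarith
        · rintro (⟨_, _, _, _⟩ | ⟨_, _, _⟩) <;> refine ⟨?_, ?_, ?_, ?_⟩ <;> linarith
    refine til_glue _ inj bottom (ih (j + 1)) 0 1 (j + 1) (by simp) ?_ ?_ (by push_cast; ring)
    · rintro p ⟨_, _, _, _⟩ ⟨_, _, _⟩; linarith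
    · intro p
      push_cast
      simp only [Set.mem_ofPred_eq]
      constructor
      · rintro ⟨_, _, _⟩
        rcases le_total p.2 (j + 1) with h | h
        · left; refine ⟨?_, ?_, ?_, ?_⟩ <;> linarith
        · right; refine ⟨?_, ?_, ?_⟩ <;> linarith
      · rintro (⟨_, _, _, _⟩ | ⟨_, _, _⟩) <;> refine ⟨?_, ?_, ?_⟩ <;> linarith

end grid

theorem til_scaled (ha : 0 < a) (hb : 0 < b) (hc : c ^ 2 = a ^ 2 + b ^ 2 + a * b)
    (n : ℕ) (hn : 0 < n) (P Q R : ℝ × ℝ) (h1 : qf (Q - R) = (n * a) ^ 2)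
    (h2 : qf (P - R) = (n * b) ^ 2) (h3 : qf (P - Q) = (n * c) ^ 2) :
    Til a b c (convexHull ℝ {P, Q, R}) (n ^ 2 * (a * b)) := by
  obtain ⟨k, rfl⟩ : ∃ k, n = k + 1 := ⟨n - 1, by omega⟩
  push_cast at *
  have hk : (0 : ℝ) < k + 1 := by positivity
  set t : ℝ := k + 1 with ht
  have hs : ∀ p : ℝ × ℝ, ∀ d, qf p = (t * d) ^ 2 → qf (t⁻¹ • p) = d ^ 2 := by
    intro p d h
    have : qf (t⁻¹ • p) = t⁻¹ ^ 2 * qf p := by simp [qf]; ring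
    rw [this, h]; field_simp
  have := triN ha hb hc R (t⁻¹ • (P - R)) (t⁻¹ • (Q - R)) (hs _ _ h1) (hs _ _ h2)
    (by rw [← smul_sub]; exact hs _ _ (by rw [← h3]; congr 1; abel)) k 0
  have e : {p : ℝ × ℝ | 0 ≤ p.1 ∧ 0 ≤ p.2 ∧ p.1 + p.2 ≤ 0 + k + 1}
      = convexHull ℝ {((t, 0) : ℝ × ℝ), (0, t), (0, 0)} := by
    ext p
    rw [hull_ineq _ _ _ _ (by simp [cr]; positivity)]
    simp only [cr, Set.mem_ofPred_eq]
    constructor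
    · rintro ⟨_, _, _⟩; refine ⟨?_, ?_, ?_⟩ <;> nlinarith
    · rintro ⟨_, _, _⟩
      refine ⟨?_, ?_, ?_⟩
      · exact le_of_mul_le_mul_left (by linarith) hk
      · exact le_of_mul_le_mul_left (by linarith) hk
      · exact le_of_mul_le_mul_left (by linarith) hk
  rw [e, AffineMap.image_convexHull, Set.image_insert_eq, Set.image_pair] at this
  have e1 : fr R (t⁻¹ • (P - R)) (t⁻¹ • (Q - R)) (t, 0) = P := by
    simp [fr_apply, smul_smul, hk.ne']
  have e2 : fr R (t⁻¹ • (P - R)) (t⁻¹ • (Q - R)) (0, t) = Q := by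
    simp [fr_apply, smul_smul, hk.ne']
  have e3 : fr R (t⁻¹ • (P - R)) (t⁻¹ • (Q - R)) (0, 0) = R := by
    simp [fr_apply]
  rw [e1, e2, e3] at this
  exact this

/-- translation -/
theorem til_shift (d : ℝ × ℝ) {D D' : Set (ℝ × ℝ)} {A : ℝ} (h : Til a b c D A)
    (hD : ∀ p, p ∈ D' ↔ p - d ∈ D) : Til a b c D' A := by
  have := til_map (fr d (1, 0) (0, 1)) (by intro x y; simp [fr_apply]) h
  convert this using 1
  ext p
  rw [hD]
  constructor
  · intro hp; exact ⟨p - d, hp, by ext <;> simp [fr_apply]⟩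
  · rintro ⟨q, hq, rfl⟩
    convert hq using 1
    ext <;> simp [fr_apply]

/-- swap -/
theorem til_swap {D D' : Set (ℝ × ℝ)} {A : ℝ} (h : Til a b c D A)
    (hD : ∀ p : ℝ × ℝ, p ∈ D' ↔ (p.2, p.1) ∈ D) : Til a b c D' A := by
  have := til_map (fr 0 (0, 1) (1, 0)) (by intro x y; simp [fr_apply, qf]; ring) h
  convert this using 1
  ext p
  rw [hD]
  constructor
  · intro hp; exact ⟨(p.2, p.1), hp, by ext <;> simp [fr_apply]⟩
  · rintro ⟨q, hq, rfl⟩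
    convert hq using 1
    ext <;> simp [fr_apply]

theorem hull_pos (P Q R X : ℝ × ℝ) (k1 k2 k3 l1 l2 l3 : ℝ) (h : 0 < cr P Q R)
    (hk1 : 0 < k1) (hk2 : 0 < k2) (hk3 : 0 < k3) (e1 : cr P Q X = k1 * l1)
    (e2 : cr Q R X = k2 * l2) (e3 : cr R P X = k3 * l3) :
    X ∈ convexHull ℝ {P, Q, R} ↔ 0 ≤ l1 ∧ 0 ≤ l2 ∧ 0 ≤ l3 := by
  rw [hull_ineq _ _ _ _ h, e1, e2, e3, mul_nonneg_iff_of_pos_left hk1,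
    mul_nonneg_iff_of_pos_left hk2, mul_nonneg_iff_of_pos_left hk3]

theorem hull_neg (P Q R X : ℝ × ℝ) (k1 k2 k3 l1 l2 l3 : ℝ) (h : 0 < cr P R Q)
    (hk1 : 0 < k1) (hk2 : 0 < k2) (hk3 : 0 < k3) (e1 : cr P R X = k1 * l1)
    (e2 : cr R Q X = k2 * l2) (e3 : cr Q P X = k3 * l3) :
    X ∈ convexHull ℝ {P, Q, R} ↔ 0 ≤ l1 ∧ 0 ≤ l2 ∧ 0 ≤ l3 := by
  rw [Set.pair_comm Q R]
  exact hull_pos P R Q X k1 k2 k3 l1 l2 l3 h hk1 hk2 hk3 e1 e2 e3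

theorem til_glue2 {D D₁ D₂ : Set (ℝ × ℝ)} {A A₁ A₂ : ℝ}
    (h₁ : Til a b c D₁ A₁) (h₂ : Til a b c D₂ A₂)
    (α β γ α' β' γ' : ℝ) (h0 : α ≠ 0 ∨ β ≠ 0) (h0' : α' ≠ 0 ∨ β' ≠ 0)
    (h : ∀ p ∈ D₁, p ∈ D₂ → α * p.1 + β * p.2 = γ ∨ α' * p.1 + β' * p.2 = γ')
    (hD : ∀ p, p ∈ D ↔ p ∈ D₁ ∨ p ∈ D₂) (hA : A = A₁ + A₂) : Til a b c D A := by
  have : D = D₁ ∪ D₂ := Set.ext hD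
  rw [this, hA]
  refine til_union h₁ h₂ ?_
  refine measure_mono_null ?_ (measure_union_null (null_line α β γ h0) (null_line α' β' γ' h0'))
  rintro p ⟨hp1, hp2⟩
  exact h p hp1 hp2

theorem til_move (g : (ℝ × ℝ) →ᵃ[ℝ] (ℝ × ℝ)) (g' : ℝ × ℝ → ℝ × ℝ)
    (hg : ∀ x y, qf (g x - g y) = qf (x - y)) (h1 : ∀ p, g (g' p) = p) (h2 : ∀ p, g' (g p) = p)
    {D D' : Set (ℝ × ℝ)} {A : ℝ} (h : Til a b c D A)
    (hD : ∀ p, p ∈ D' ↔ g' p ∈ D) : Til a b c D' A := by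
  have := til_map g hg h
  convert this using 1
  ext p
  rw [hD]
  constructor
  · intro hp; exact ⟨g' p, hp, h1 p⟩
  · rintro ⟨q, hq, rfl⟩
    rw [h2]; exact hq

section main
variable (a b c : ℕ) (ha : 0 < a) (hb : 0 < b) (hab : Nat.Coprime a b)
  (h : (c : ℝ) ^ 2 = a ^ 2 + b ^ 2 + a * b)

include ha hb h

theorem rect0 (n k : ℕ) (hn : 0 < n) (hk : 0 < k) (x0 y0 : ℝ) :
    Til a b c {p | x0 ≤ p.1 ∧ p.1 ≤ x0 + n * a ∧ y0 ≤ p.2 ∧ p.2 ≤ y0 + k * b}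
      (2 * (n * a) * (k * b)) := by
  obtain ⟨n, rfl⟩ : ∃ j, n = j + 1 := ⟨n - 1, by omega⟩
  obtain ⟨k, rfl⟩ : ∃ j, k = j + 1 := ⟨k - 1, by omega⟩
  have ha' : (0 : ℝ) < a := by exact_mod_cast ha
  have hb' : (0 : ℝ) < b := by exact_mod_cast hb
  have := para (a := a) (b := b) (c := c) ha' hb' h (x0 + (n + 1) * a, y0) (0, b) (-a, 0)
    (by simp [qf]) (by simp [qf]) (by simp [qf]; linarith) k n
  push_cast
  convert this using 1
  · ext p
    simp only [Set.mem_ofPred_eq, Set.mem_image, fr_apply]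
    constructor
    · rintro ⟨q1, q2, q3, q4⟩
      refine ⟨((p.2 - y0) / b, (x0 + (n + 1) * a - p.1) / a), ⟨?_, ?_, ?_, ?_⟩, ?_⟩
      · apply div_nonneg <;> linarith
      · rw [div_le_iff₀ hb']; linarith
      · apply div_nonneg <;> linarith
      · rw [div_le_iff₀ ha']; linarith
      · ext
        · simp; field_simp; ring
        · simp; field_simp; ring
    · rintro ⟨q, ⟨q1, q2, q3, q4⟩, rfl⟩
      simp only [Prod.fst_add, Prod.snd_add, Prod.smul_fst, Prod.smul_snd, smul_eq_mul]
      refine ⟨?_, ?_, ?_, ?_⟩ <;> nlinarith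
  · ring

theorem rect (x y k : ℕ) (hx : 0 < x) (hy : 0 < y) (hk : 0 < k) (x0 y0 : ℝ) :
    Til a b c {p | x0 ≤ p.1 ∧ p.1 ≤ x0 + (x * a + y * b) ∧ y0 ≤ p.2 ∧ p.2 ≤ y0 + k * (a * b)}
      (2 * (x * a + y * b) * (k * (a * b))) := by
  have ha' : (0 : ℝ) < a := by exact_mod_cast ha
  have hb' : (0 : ℝ) < b := by exact_mod_cast hb
  have hx' : (0 : ℝ) < x := by exact_mod_cast hx
  have hy' : (0 : ℝ) < y := by exact_mod_cast hy
  have r1 := rect0 a b c ha hb h x (k * a) hx (by positivity) x0 y0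
  have r2 := rect0 a b c ha hb h (k * b) y (by positivity) hy y0 (x0 + x * a)
  have r3 : Til a b c {p | x0 + x * a ≤ p.1 ∧ p.1 ≤ x0 + x * a + y * b ∧
      y0 ≤ p.2 ∧ p.2 ≤ y0 + ((k * b : ℕ) : ℝ) * a} (2 * (((k * b : ℕ) : ℝ) * a) * (y * b)) := by
    refine til_swap r2 ?_
    intro p; simp only [Set.mem_ofPred_eq]; tauto
  have e1 : (0 : ℝ) < x * a := by positivity
  have e2 : (0 : ℝ) < y * b := by positivity
  refine til_glue' r1 r3 1 0 (x0 + x * a) (by simp) ?_ ?_ (by push_cast; ring)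
  · rintro p ⟨_, _, _, _⟩ ⟨_, _, _, _⟩; linarith
  · intro p
    have e3 : (((k * a : ℕ) : ℝ) * b) = k * (a * b) := by push_cast; ring
    have e4 : (((k * b : ℕ) : ℝ) * a) = k * (a * b) := by push_cast; ring
    simp only [Set.mem_ofPred_eq, e3, e4]
    constructor
    · rintro ⟨_, _, _, _⟩
      rcases le_total p.1 (x0 + x * a) with h | h
      · left; refine ⟨?_, ?_, ?_, ?_⟩ <;> linarith
      · right; refine ⟨?_, ?_, ?_, ?_⟩ <;> linarith
    · rintro (⟨_, _, _, _⟩ | ⟨_, _, _, _⟩) <;> refine ⟨?_, ?_, ?_, ?_⟩ <;> linarith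

/-- basic trapezoid, base `c²`, leg `ab` -/
theorem trap0 : Til a b c {p | 0 ≤ p.1 ∧ 0 ≤ p.2 ∧ p.2 ≤ a * b ∧
    p.1 + p.2 ≤ (a : ℝ) ^ 2 + b ^ 2 + a * b}
    ((c ^ 2 + a ^ 2 + b ^ 2) * (a * b)) := by
  have ha' : (0 : ℝ) < a := by exact_mod_cast ha
  have hb' : (0 : ℝ) < b := by exact_mod_cast hb
  have hc : 0 < c := by
    rcases Nat.eq_zero_or_pos c with h0 | h0
    · subst h0; exfalso; push_cast at h; nlinarith
    · exact h0
  have hab' : (0 : ℝ) < a * b := by positivity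
  have t1 := til_scaled (a := a) (b := b) (c := c) ha' hb' h c hc (0, 0)
    ((a : ℝ) ^ 2 + b ^ 2 + a * b, 0)
    ((b : ℝ) ^ 2, (a : ℝ) * b)
    (by simp only [qf, Prod.fst_sub, Prod.snd_sub]; linear_combination (-(a : ℝ) ^ 2) * h)
    (by simp only [qf, Prod.fst_sub, Prod.snd_sub]; linear_combination (-(b : ℝ) ^ 2) * h)
    (by simp only [qf, Prod.fst_sub, Prod.snd_sub]
        linear_combination (-(c : ℝ) ^ 2 - ((a : ℝ) ^ 2 + b ^ 2 + a * b)) * h)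
  have t2 := til_scaled (a := a) (b := b) (c := c) ha' hb' h b hb ((b : ℝ) ^ 2, (a : ℝ) * b)
    (0, 0) (0, (a : ℝ) * b)
    (by simp only [qf, Prod.fst_sub, Prod.snd_sub]; ring)
    (by simp only [qf, Prod.fst_sub, Prod.snd_sub]; ring)
    (by simp only [qf, Prod.fst_sub, Prod.snd_sub]; linear_combination (-(b : ℝ) ^ 2) * h)
  have t3 := til_scaled (a := a) (b := b) (c := c) ha' hb' h a ha
    ((a : ℝ) ^ 2 + b ^ 2 + a * b, 0)
    ((b : ℝ) ^ 2, (a : ℝ) * b) ((a : ℝ) ^ 2 + b ^ 2, (a : ℝ) * b)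
    (by simp only [qf, Prod.fst_sub, Prod.snd_sub]; ring)
    (by simp only [qf, Prod.fst_sub, Prod.snd_sub]; ring)
    (by simp only [qf, Prod.fst_sub, Prod.snd_sub]; linear_combination (-(a : ℝ) ^ 2) * h)
  have hK0 : (0 : ℝ) < (a : ℝ) ^ 2 + b ^ 2 + a * b := by positivity
  have m1 := fun p : ℝ × ℝ => hull_pos (0, 0) ((a : ℝ) ^ 2 + b ^ 2 + a * b, 0)
    ((b : ℝ) ^ 2, (a : ℝ) * b) p ((a : ℝ) ^ 2 + b ^ 2 + a * b) a b p.2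
    (b * ((a : ℝ) ^ 2 + b ^ 2 + a * b) - b * p.1 - (a + b) * p.2) (a * p.1 - b * p.2)
    (by simp only [cr, sub_zero, zero_mul, mul_zero]; positivity) hK0 ha' hb' (by simp only [cr]; ring) (by simp only [cr]; ring)
    (by simp only [cr]; ring)
  have m2 := fun p : ℝ × ℝ => hull_neg ((b : ℝ) ^ 2, (a : ℝ) * b) (0, 0) (0, (a : ℝ) * b) p
    (b ^ 2) (a * b) b (a * b - p.2) p.1 (b * p.2 - a * p.1)
    (by simp only [cr]; ring_nf; positivity) (by positivity) hab' hb' (by simp only [cr]; ring) (by simp only [cr]; ring)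
    (by simp only [cr]; ring)
  have m3 := fun p : ℝ × ℝ => hull_neg ((a : ℝ) ^ 2 + b ^ 2 + a * b, 0)
    ((b : ℝ) ^ 2, (a : ℝ) * b) ((a : ℝ) ^ 2 + b ^ 2, (a : ℝ) * b) p
    (a * b) (a ^ 2) a ((a : ℝ) ^ 2 + b ^ 2 + a * b - p.1 - p.2) (a * b - p.2)
    ((a + b) * p.2 + b * p.1 - b * ((a : ℝ) ^ 2 + b ^ 2 + a * b))
    (by simp only [cr]; ring_nf; positivity) hab' (by positivity) ha' (by simp only [cr]; ring) (by simp only [cr]; ring)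
    (by simp only [cr]; ring)
  generalize convexHull ℝ {((0, 0) : ℝ × ℝ), ((a : ℝ) ^ 2 + b ^ 2 + a * b, 0),
    ((b : ℝ) ^ 2, (a : ℝ) * b)} = T1 at *
  generalize convexHull ℝ {((b : ℝ) ^ 2, (a : ℝ) * b), ((0, 0) : ℝ × ℝ), (0, (a : ℝ) * b)} = T2 at *
  generalize convexHull ℝ {((a : ℝ) ^ 2 + b ^ 2 + a * b, (0 : ℝ)),
    ((b : ℝ) ^ 2, (a : ℝ) * b), ((a : ℝ) ^ 2 + b ^ 2, (a : ℝ) * b)} = T3 at *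
  have t12 := til_glue' t1 t2 a (-b) 0 (by left; positivity) (D := T1 ∪ T2)
    (by intro p hp1 hp2; rw [m1] at hp1; rw [m2] at hp2; linarith)
    (by intro p; rfl) rfl
  refine til_glue' t12 t3 b (a + b) (b * ((a : ℝ) ^ 2 + b ^ 2 + a * b)) (by left; positivity)
    ?_ ?_ (by ring)
  · intro p hp hp3
    rw [m3] at hp3
    obtain ⟨q1, q2, q3⟩ := hp3
    rcases hp with hp | hp
    · rw [m1] at hp; linarith
    · rw [m2] at hp
      obtain ⟨r1, r2, r3⟩ := hp
      apply le_antisymm _ (by linarith)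
      refine le_of_mul_le_mul_left ?_ ha'
      nlinarith
  · intro p
    rw [Set.mem_union, m1, m2, m3]
    simp only [Set.mem_ofPred_eq]
    constructor
    · rintro ⟨q1, q2, q3, q4⟩
      rcases le_total (a * p.1) (b * p.2) with h1 | h1
      · left; right; refine ⟨?_, ?_, ?_⟩ <;> linarith
      · rcases le_total ((a + b) * p.2 + b * p.1) (b * ((a : ℝ) ^ 2 + b ^ 2 + a * b)) with h2 | h2
        · left; left; refine ⟨?_, ?_, ?_⟩ <;> linarith
        · right; refine ⟨?_, ?_, ?_⟩ <;> linarith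
    · rintro ((⟨q1, q2, q3⟩ | ⟨q1, q2, q3⟩) | ⟨q1, q2, q3⟩)
      · refine ⟨?_, q1, ?_, ?_⟩
        · refine le_of_mul_le_mul_left ?_ ha'
          nlinarith
        · refine le_of_mul_le_mul_left ?_ hK0
          nlinarith
        · refine le_of_mul_le_mul_left ?_ hb'
          nlinarith
      · refine ⟨q2, ?_, by linarith, ?_⟩
        · refine le_of_mul_le_mul_left ?_ hb'
          nlinarith
        · refine le_of_mul_le_mul_left ?_ ha'
          nlinarith [mul_pos ha' ha', mul_pos (mul_pos ha' ha') ha']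
      · refine ⟨?_, ?_, by linarith, by linarith⟩
        · refine le_of_mul_le_mul_left ?_ hb'
          nlinarith [mul_pos hb' hb', mul_pos (mul_pos hb' hb') hb']
        · refine le_of_mul_le_mul_left ?_ ha'
          nlinarith

theorem trap1 (x y : ℕ) (hx : 0 < x) (hy : 0 < y) :
    Til a b c {p | 0 ≤ p.1 ∧ 0 ≤ p.2 ∧ p.2 ≤ a * b ∧
      p.1 + p.2 ≤ (a : ℝ) ^ 2 + b ^ 2 + a * b + (x * a + y * b)}
      ((c ^ 2 + a ^ 2 + b ^ 2 + 2 * (x * a + y * b)) * (a * b)) := by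
  have ha' : (0 : ℝ) < a := by exact_mod_cast ha
  have hb' : (0 : ℝ) < b := by exact_mod_cast hb
  have hx' : (0 : ℝ) < x := by exact_mod_cast hx
  have hy' : (0 : ℝ) < y := by exact_mod_cast hy
  have hr : (0 : ℝ) < x * a + y * b := by positivity
  have r1 := rect a b c ha hb h x y 1 hx hy one_pos 0 0
  generalize ((x : ℝ) * a + y * b) = r at *
  have t1 : Til a b c {p | r ≤ p.1 ∧ 0 ≤ p.2 ∧ p.2 ≤ a * b ∧
      p.1 + p.2 ≤ (a : ℝ) ^ 2 + b ^ 2 + a * b + r} ((c ^ 2 + a ^ 2 + b ^ 2) * (a * b)) := by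
    refine til_shift (r, 0) (trap0 a b c ha hb h) ?_
    intro p
    simp only [Set.mem_ofPred_eq, Prod.fst_sub, Prod.snd_sub]
    constructor
    · rintro ⟨_, _, _, _⟩; refine ⟨?_, ?_, ?_, ?_⟩ <;> linarith
    · rintro ⟨_, _, _, _⟩; refine ⟨?_, ?_, ?_, ?_⟩ <;> linarith
  refine til_glue' r1 t1 1 0 r (by simp) ?_ ?_ (by push_cast; ring)
  · rintro p ⟨_, _, _, _⟩ ⟨_, _, _, _⟩; linarith
  · intro p
    push_cast
    simp only [Set.mem_ofPred_eq]
    constructor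
    · rintro ⟨_, _, _, _⟩
      rcases le_total p.1 r with h1 | h1
      · left; refine ⟨?_, ?_, ?_, ?_⟩ <;> linarith
      · right; refine ⟨?_, ?_, ?_, ?_⟩ <;> linarith
    · rintro (⟨_, _, _, _⟩ | ⟨_, _, _, _⟩) <;> refine ⟨?_, ?_, ?_, ?_⟩ <;> nlinarith

include hab in
theorem trap1' (L : ℕ) (hL : a ^ 2 + b ^ 2 + a * b + a + b + a * b ≤ L) :
    Til a b c {p | 0 ≤ p.1 ∧ 0 ≤ p.2 ∧ p.2 ≤ a * b ∧ p.1 + p.2 ≤ (L : ℝ)}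
      ((L : ℝ) ^ 2 - (L - a * b) ^ 2) := by
  obtain ⟨d, hd⟩ := Nat.exists_eq_add_of_le hL
  obtain ⟨x, y, hxy⟩ := Nat.exists_add_mul_eq_of_gcd_dvd_of_mul_pred_le a b (d + a * b)
    (by rw [hab.gcd_eq_one]; exact one_dvd _)
    (le_trans (Nat.mul_le_mul (Nat.pred_le a) (Nat.pred_le b)) (by omega))
  have := trap1 a b c ha hb h (x + 1) (y + 1) (by omega) (by omega)
  have e : (L : ℝ) = (a : ℝ) ^ 2 + b ^ 2 + a * b + (((x + 1 : ℕ) : ℝ) * a + ((y + 1 : ℕ) : ℝ) * b) := by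
    have : L = a ^ 2 + b ^ 2 + a * b + ((x + 1) * a + (y + 1) * b) := by
      rw [hd]; linarith
    rw [this]; push_cast; ring
  rw [← e] at this
  convert this using 1
  rw [h]
  have e' : (((x + 1 : ℕ) : ℝ) * a + ((y + 1 : ℕ) : ℝ) * b) = L - ((a : ℝ) ^ 2 + b ^ 2 + a * b) := by
    linarith
  rw [e']; ring

include hab in
theorem trapk (k w : ℕ) (hw : a ^ 2 + b ^ 2 + a * b + a + b ≤ w) :
    Til a b c {p | 0 ≤ p.1 ∧ 0 ≤ p.2 ∧ p.2 ≤ (k + 1) * (a * b) ∧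
      p.1 + p.2 ≤ (w : ℝ) + (k + 1) * (a * b)}
      (((w : ℝ) + (k + 1) * (a * b)) ^ 2 - w ^ 2) := by
  have hab' : (0 : ℝ) ≤ a * b := by positivity
  induction k with
  | zero =>
    have := trap1' a b c ha hb hab h (w + a * b) (by omega)
    push_cast at this
    simpa using this
  | succ k ih =>
    have t1 := trap1' a b c ha hb hab h (w + (k + 2) * (a * b))
      (by have := Nat.zero_le (k * (a * b)); nlinarith)
    have t2 : Til a b c {p | 0 ≤ p.1 ∧ a * b ≤ p.2 ∧ p.2 ≤ (k + 2) * (a * b) ∧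
      p.1 + p.2 ≤ (w : ℝ) + (k + 2) * (a * b)} (((w : ℝ) + (k + 1) * (a * b)) ^ 2 - w ^ 2) := by
      refine til_shift (0, a * b) ih ?_
      intro p
      simp only [Set.mem_ofPred_eq, Prod.fst_sub, Prod.snd_sub]
      constructor
      · rintro ⟨_, _, _, _⟩; refine ⟨?_, ?_, ?_, ?_⟩ <;> linarith
      · rintro ⟨_, _, _, _⟩; refine ⟨?_, ?_, ?_, ?_⟩ <;> linarith
    refine til_glue' t1 t2 0 1 (a * b) (by simp) ?_ ?_ (by push_cast; ring)
    · rintro p ⟨_, _, _, _⟩ ⟨_, _, _, _⟩; linarith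
    · intro p
      have : (0 : ℝ) ≤ k * (a * b) := by positivity
      push_cast
      simp only [Set.mem_ofPred_eq]
      constructor
      · rintro ⟨_, _, _, _⟩
        rcases le_total p.2 (a * b) with h1 | h1
        · left; refine ⟨?_, ?_, ?_, ?_⟩ <;> linarith
        · right; refine ⟨?_, ?_, ?_, ?_⟩ <;> linarith
      · rintro (⟨_, _, _, _⟩ | ⟨_, _, _, _⟩) <;> refine ⟨?_, ?_, ?_, ?_⟩ <;> linarith

include hab in
theorem eq3 (k1 k2 k3 : ℕ) (h1 : a ^ 2 + b ^ 2 + a * b + a + b ≤ k1 * (a * b))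
    (h2 : a ^ 2 + b ^ 2 + a * b + a + b ≤ k2 * (a * b))
    (h3 : a ^ 2 + b ^ 2 + a * b + a + b ≤ k3 * (a * b)) (s : ℝ)
    (hs : s = (k1 + k2 + k3) * (a * b)) :
    Til a b c {p | 0 ≤ p.1 ∧ 0 ≤ p.2 ∧ p.1 + p.2 ≤ s} (s ^ 2) := by
  have tk : ∀ k w : ℕ, a ^ 2 + b ^ 2 + a * b + a + b ≤ k * (a * b) →
      a ^ 2 + b ^ 2 + a * b + a + b ≤ w * (a * b) → ∀ ℓ q : ℝ, ℓ = k * (a * b) → q = w * (a * b) →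
      Til a b c {p | 0 ≤ p.1 ∧ 0 ≤ p.2 ∧ p.2 ≤ ℓ ∧ p.1 + p.2 ≤ q + ℓ} ((q + ℓ) ^ 2 - q ^ 2) := by
    intro k w hk hw ℓ q hl hq
    obtain ⟨j, rfl⟩ : ∃ j, k = j + 1 := ⟨k - 1, by
      rcases Nat.eq_zero_or_pos k with h0 | h0
      · subst h0; omega
      · omega⟩
    have := trapk a b c ha hb hab h j (w * (a * b)) hw
    push_cast at *
    rw [← hq, ← hl] at this
    exact this
  have h1' : (0 : ℝ) ≤ k1 * (a * b) := by positivity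
  have h2' : (0 : ℝ) ≤ k2 * (a * b) := by positivity
  have h3' : (0 : ℝ) ≤ k3 * (a * b) := by positivity
  have T1 := tk k1 k3 h1 h3 _ _ rfl rfl
  have T2 := tk k2 k1 h2 h1 _ _ rfl rfl
  have T3 := tk k3 k2 h3 h2 _ _ rfl rfl
  rw [add_mul, add_mul] at hs
  generalize (k1 : ℝ) * (a * b) = u at *
  generalize (k2 : ℝ) * (a * b) = X at *
  generalize (k3 : ℝ) * (a * b) = Z at *
  have R1 : Til a b c {p | X ≤ p.1 ∧ 0 ≤ p.2 ∧ p.2 ≤ u ∧ p.1 + p.2 ≤ s} ((Z + u) ^ 2 - Z ^ 2) := by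
    refine til_shift (X, 0) T1 ?_
    intro p
    simp only [Set.mem_ofPred_eq, Prod.fst_sub, Prod.snd_sub]
    constructor
    · rintro ⟨_, _, _, _⟩; refine ⟨?_, ?_, ?_, ?_⟩ <;> linarith
    · rintro ⟨_, _, _, _⟩; refine ⟨?_, ?_, ?_, ?_⟩ <;> linarith
  have R2 : Til a b c {p | 0 ≤ p.1 ∧ 0 ≤ p.2 ∧ p.1 ≤ X ∧ p.1 + p.2 ≤ s - Z}
      ((u + X) ^ 2 - u ^ 2) := by
    refine til_move (fr (0, X + u) (0, -1) (1, -1)) (fun p => (X + u - p.1 - p.2, p.1)) ?_ ?_ ?_ T2 ?_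
    · intro x y; simp [fr_apply, qf]; ring
    · intro p; ext
      · simp [fr_apply]
      · simp [fr_apply]; ring
    · intro p; ext
      · simp [fr_apply]; ring
      · simp [fr_apply]
    · intro p
      simp only [Set.mem_ofPred_eq]
      constructor
      · rintro ⟨_, _, _, _⟩; refine ⟨?_, ?_, ?_, ?_⟩ <;> linarith
      · rintro ⟨_, _, _, _⟩; refine ⟨?_, ?_, ?_, ?_⟩ <;> linarith
  have R3 : Til a b c {p | 0 ≤ p.1 ∧ u ≤ p.2 ∧ s - Z ≤ p.1 + p.2 ∧ p.1 + p.2 ≤ s}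
      ((X + Z) ^ 2 - X ^ 2) := by
    refine til_move (fr (X + Z, u) (-1, 1) (-1, 0)) (fun p => (p.2 - u, s - p.1 - p.2)) ?_ ?_ ?_ T3 ?_
    · intro x y; simp [fr_apply, qf]; ring
    · intro p; ext
      · simp [fr_apply]; linarith
      · simp [fr_apply]
    · intro p; ext
      · simp [fr_apply]
      · simp [fr_apply]; linarith
    · intro p
      simp only [Set.mem_ofPred_eq]
      constructor
      · rintro ⟨_, _, _, _⟩; refine ⟨?_, ?_, ?_, ?_⟩ <;> linarith
      · rintro ⟨_, _, _, _⟩; refine ⟨?_, ?_, ?_, ?_⟩ <;> linarith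
  have R12 := til_glue' R1 R2 1 0 X (by simp) (D := _ ∪ _)
    (by rintro p ⟨_, _, _, _⟩ ⟨_, _, _, _⟩; linarith) (fun p => Iff.rfl) rfl
  refine til_glue2 R12 R3 0 1 u 1 1 (s - Z) (by simp) (by simp) ?_ ?_ (by rw [hs]; ring)
  · rintro p (⟨_, _, _, _⟩ | ⟨_, _, _, _⟩) ⟨_, _, _, _⟩
    · left; linarith
    · right; linarith
  · intro p
    simp only [Set.mem_ofPred_eq, Set.mem_union]
    constructor
    · rintro ⟨q1, q2, q3⟩
      rcases le_total p.2 u with hy | hy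
      · rcases le_total X p.1 with hx | hx
        · left; left; exact ⟨hx, q2, hy, q3⟩
        · left; right; refine ⟨?_, ?_, ?_, ?_⟩ <;> linarith
      · rcases le_total (s - Z) (p.1 + p.2) with hz | hz
        · right; exact ⟨q1, hy, hz, q3⟩
        · left; right; refine ⟨?_, ?_, ?_, ?_⟩ <;> linarith
    · rintro ((⟨_, _, _, _⟩ | ⟨_, _, _, _⟩) | ⟨_, _, _, _⟩) <;> refine ⟨?_, ?_, ?_⟩ <;> linarith

theorem bigT (m : ℕ) (hm : 0 < m)
    (hE : Til a b c {p | 0 ≤ p.1 ∧ 0 ≤ p.2 ∧ p.1 + p.2 ≤ 2 * (a * b) * m} ((2 * (a * b) * m) ^ 2)) :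
    Til a b c (convexHull ℝ {(((b : ℝ) * (b + 2 * a) * m, 0) : ℝ × ℝ),
      (0, (a : ℝ) * (a + 2 * b) * m), (0, 0)})
      ((a + 2 * b) * (b + 2 * a) * m ^ 2 * (a * b)) := by
  have ha' : (0 : ℝ) < a := by exact_mod_cast ha
  have hb' : (0 : ℝ) < b := by exact_mod_cast hb
  have hm' : (0 : ℝ) < m := by exact_mod_cast hm
  have hc : 0 < c := by
    rcases Nat.eq_zero_or_pos c with h0 | h0
    · subst h0; exfalso; push_cast at h; nlinarith
    · exact h0
  have t1 := til_scaled (a := a) (b := b) (c := c) ha' hb' h (c * m) (by positivity)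
    ((b : ℝ) * (b + 2 * a) * m, 0) (0, (a : ℝ) * (a + 2 * b) * m) ((a : ℝ) * b * m, (a : ℝ) * b * m)
    (by simp only [qf, Prod.fst_sub, Prod.snd_sub]; push_cast; linear_combination (-(a * m : ℝ) ^ 2) * h)
    (by simp only [qf, Prod.fst_sub, Prod.snd_sub]; push_cast; linear_combination (-(b * m : ℝ) ^ 2) * h)
    (by simp only [qf, Prod.fst_sub, Prod.snd_sub]; push_cast
        linear_combination (-(c : ℝ) ^ 2 - ((a : ℝ) ^ 2 + b ^ 2 + a * b)) * m ^ 2 * h)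
  have t2 := til_scaled (a := a) (b := b) (c := c) ha' hb' h (b * m) (by positivity)
    ((b : ℝ) * (b + 2 * a) * m, 0) ((a : ℝ) * b * m, (a : ℝ) * b * m) (2 * (a * b) * m, 0)
    (by simp only [qf, Prod.fst_sub, Prod.snd_sub]; push_cast; ring)
    (by simp only [qf, Prod.fst_sub, Prod.snd_sub]; push_cast; ring)
    (by simp only [qf, Prod.fst_sub, Prod.snd_sub]; push_cast; linear_combination (-(b * m : ℝ) ^ 2) * h)
  have t3 := til_scaled (a := a) (b := b) (c := c) ha' hb' h (a * m) (by positivity)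
    ((a : ℝ) * b * m, (a : ℝ) * b * m) (0, (a : ℝ) * (a + 2 * b) * m) (0, 2 * (a * b) * m)
    (by simp only [qf, Prod.fst_sub, Prod.snd_sub]; push_cast; ring)
    (by simp only [qf, Prod.fst_sub, Prod.snd_sub]; push_cast; ring)
    (by simp only [qf, Prod.fst_sub, Prod.snd_sub]; push_cast; linear_combination (-(a * m : ℝ) ^ 2) * h)
  have m0 := fun p : ℝ × ℝ => hull_pos ((b : ℝ) * (b + 2 * a) * m, 0) (0, (a : ℝ) * (a + 2 * b) * m)
    (0, 0) p m (a * (a + 2 * b) * m) (b * (b + 2 * a) * m)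
    (a * b * (a + 2 * b) * (b + 2 * a) * m - a * (a + 2 * b) * p.1 - b * (b + 2 * a) * p.2)
    p.1 p.2 (by simp only [cr]; ring_nf; positivity) hm' (by positivity) (by positivity)
    (by simp only [cr]; ring) (by simp only [cr]; ring) (by simp only [cr]; ring)
  have m1 := fun p : ℝ × ℝ => hull_pos ((b : ℝ) * (b + 2 * a) * m, 0) (0, (a : ℝ) * (a + 2 * b) * m)
    ((a : ℝ) * b * m, (a : ℝ) * b * m) p m (a * m) (b * m)
    (a * b * (a + 2 * b) * (b + 2 * a) * m - a * (a + 2 * b) * p.1 - b * (b + 2 * a) * p.2)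
    (b * p.2 + (a + b) * p.1 - a * b * (a + 2 * b) * m)
    ((a + b) * p.2 + a * p.1 - a * b * (2 * a + b) * m)
    (by simp only [cr]; ring_nf; positivity) hm' (by positivity) (by positivity)
    (by simp only [cr]; ring) (by simp only [cr]; ring) (by simp only [cr]; ring)
  have m2 := fun p : ℝ × ℝ => hull_pos ((b : ℝ) * (b + 2 * a) * m, 0)
    ((a : ℝ) * b * m, (a : ℝ) * b * m) (2 * (a * b) * m, 0) p (b * m) (a * b * m) (b ^ 2 * m)
    (-((a + b) * p.2 + a * p.1 - a * b * (2 * a + b) * m)) (p.1 + p.2 - 2 * (a * b) * m) p.2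
    (by simp only [cr]; ring_nf; positivity) (by positivity) (by positivity) (by positivity)
    (by simp only [cr]; ring) (by simp only [cr]; ring) (by simp only [cr]; ring)
  have m3 := fun p : ℝ × ℝ => hull_pos ((a : ℝ) * b * m, (a : ℝ) * b * m)
    (0, (a : ℝ) * (a + 2 * b) * m) (0, 2 * (a * b) * m) p (a * m) (a ^ 2 * m) (a * b * m)
    (-(b * p.2 + (a + b) * p.1 - a * b * (a + 2 * b) * m)) p.1 (p.1 + p.2 - 2 * (a * b) * m)
    (by simp only [cr]; ring_nf; positivity) (by positivity) (by positivity) (by positivity)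
    (by simp only [cr]; ring) (by simp only [cr]; ring) (by simp only [cr]; ring)
  generalize convexHull ℝ {((b : ℝ) * (b + 2 * a) * m, (0 : ℝ)), (0, (a : ℝ) * (a + 2 * b) * m),
    (0, 0)} = T at *
  generalize convexHull ℝ {((b : ℝ) * (b + 2 * a) * m, (0 : ℝ)), (0, (a : ℝ) * (a + 2 * b) * m),
    ((a : ℝ) * b * m, (a : ℝ) * b * m)} = D1 at *
  generalize convexHull ℝ {((b : ℝ) * (b + 2 * a) * m, (0 : ℝ)),
    ((a : ℝ) * b * m, (a : ℝ) * b * m), (2 * ((a : ℝ) * b) * m, 0)} = D2 at *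
  generalize convexHull ℝ {((a : ℝ) * b * m, (a : ℝ) * b * m),
    ((0 : ℝ), (a : ℝ) * (a + 2 * b) * m), (0, 2 * ((a : ℝ) * b) * m)} = D3 at *
  have id0 : ∀ p : ℝ × ℝ, a * ((a + b) * p.2 + a * p.1 - a * b * (2 * a + b) * m)
      + b * (b * p.2 + (a + b) * p.1 - a * b * (a + 2 * b) * m)
      = ((a : ℝ) ^ 2 + b ^ 2 + a * b) * (p.1 + p.2 - 2 * (a * b) * m) := by intro p; ring
  have hK : (0 : ℝ) < (a : ℝ) ^ 2 + b ^ 2 + a * b := by positivity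
  have D14 := til_glue' t1 hE 1 1 (2 * (a * b) * m) (by simp) (D := _ ∪ _) (by
    intro p hp1 hp4
    rw [m1] at hp1
    obtain ⟨q1, q2, q3⟩ := hp1
    obtain ⟨r1, r2, r3⟩ := hp4
    have : 0 ≤ p.1 + p.2 - 2 * (a * b) * m := by
      refine nonneg_of_mul_nonneg_right ?_ hK
      rw [← id0]; positivity
    linarith) (fun p => Iff.rfl) rfl
  have D143 := til_glue2 D14 t3 (a + b) b (a * b * (a + 2 * b) * m) 1 1 (2 * (a * b) * m)
    (by left; positivity) (by simp) (D := _ ∪ _) (by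
    intro p hp hp3
    rw [m3] at hp3
    rcases hp with hp | ⟨r1, r2, r3⟩
    · rw [m1] at hp; left; linarith
    · right; linarith) (fun p => Iff.rfl) rfl
  refine til_glue2 D143 t2 a (a + b) (a * b * (2 * a + b) * m) 1 1 (2 * (a * b) * m)
    (by left; positivity) (by simp) ?_ ?_ (by push_cast; rw [mul_pow (c : ℝ), h]; ring)
  · intro p hp hp2
    rw [m2] at hp2
    obtain ⟨q1, q2, q3⟩ := hp2
    rcases hp with (hp | ⟨r1, r2, r3⟩) | hp
    · rw [m1] at hp; left; linarith
    · right; linarith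
    · rw [m3] at hp
      right
      obtain ⟨r1, r2, r3⟩ := hp
      have : 0 ≤ -(p.1 + p.2 - 2 * (a * b) * m) := by
        refine nonneg_of_mul_nonneg_right ?_ hK
        rw [mul_neg, ← id0, neg_add, ← mul_neg, ← mul_neg]; positivity
      linarith
  · intro p
    have e1 := m1 p
    have e2 := m2 p
    have e3 := m3 p
    have iF : 2 * (a * b * (a + 2 * b) * (b + 2 * a) * m - a * (a + 2 * b) * p.1
        - b * (b + 2 * a) * p.2) = -(p.1 + p.2 - 2 * (a * b) * m) * ((a + 2 * b) * (b + 2 * a))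
        + p.1 * (b * (a + 2 * b)) + p.2 * (a * (b + 2 * a)) := by ring
    have i1x : (a : ℝ) * b * ((a : ℝ) ^ 2 + b ^ 2 + a * b) * p.1 = a * (b ^ 2 + 2 * a * b) *
        (b * p.2 + (a + b) * p.1 - a * b * (a + 2 * b) * m) + a * b *
        (a * b * (a + 2 * b) * (b + 2 * a) * m - a * (a + 2 * b) * p.1 - b * (b + 2 * a) * p.2) := by
      ring
    have i1y : (a : ℝ) * b * ((a : ℝ) ^ 2 + b ^ 2 + a * b) * p.2 = b * (a ^ 2 + 2 * a * b) *
        ((a + b) * p.2 + a * p.1 - a * b * (2 * a + b) * m) + a * b *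
        (a * b * (a + 2 * b) * (b + 2 * a) * m - a * (a + 2 * b) * p.1 - b * (b + 2 * a) * p.2) := by
      ring
    have i2x : (a : ℝ) * b ^ 3 * p.1 = a * b * (b ^ 2 + 2 * a * b) * (p.1 + p.2 - 2 * (a * b) * m)
        + a * b ^ 3 * p.2 + 2 * a * b ^ 2 * (-((a + b) * p.2 + a * p.1 - a * b * (2 * a + b) * m)) := by
      ring
    have i3y : (a : ℝ) ^ 3 * b * p.2 = a * b * (a ^ 2 + 2 * a * b) * (p.1 + p.2 - 2 * (a * b) * m)
        + a ^ 3 * b * p.1 + 2 * a ^ 2 * b * (-(b * p.2 + (a + b) * p.1 - a * b * (a + 2 * b) * m)) := by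
      ring
    have i2T : a * b * (a + 2 * b) * (b + 2 * a) * m - a * (a + 2 * b) * p.1 - b * (b + 2 * a) * p.2
        = ((a : ℝ) ^ 2 + b ^ 2 + a * b) * p.2 + (a + 2 * b) *
        (-((a + b) * p.2 + a * p.1 - a * b * (2 * a + b) * m)) := by ring
    have i3T : a * b * (a + 2 * b) * (b + 2 * a) * m - a * (a + 2 * b) * p.1 - b * (b + 2 * a) * p.2
        = ((a : ℝ) ^ 2 + b ^ 2 + a * b) * p.1 + (b + 2 * a) *
        (-(b * p.2 + (a + b) * p.1 - a * b * (a + 2 * b) * m)) := by ring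
    rw [m0, Set.mem_union, Set.mem_union, e1, e2, e3]
    simp only [Set.mem_ofPred_eq]
    generalize a * b * (a + 2 * b) * (b + 2 * a) * m - a * (a + 2 * b) * p.1 - b * (b + 2 * a) * p.2
      = lT at *
    generalize (a + b) * p.2 + a * p.1 - a * b * (2 * a + b) * m = lA at *
    generalize b * p.2 + (a + b) * p.1 - a * b * (a + 2 * b) * m = lB at *
    have hF : p.1 + p.2 ≤ 2 * (a * b) * m ↔ 0 ≤ - (p.1 + p.2 - 2 * (a * b) * m) := by
      constructor <;> intro h <;> linarith
    rw [hF]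
    generalize p.1 + p.2 - 2 * (a * b) * m = lF at *
    constructor
    · rintro ⟨q1, q2, q3⟩
      rcases le_total lF 0 with f | f
      · left; left; right; exact ⟨q2, q3, by linarith⟩
      · rcases le_total lA 0 with g | g
        · right; exact ⟨by linarith, f, q3⟩
        · rcases le_total lB 0 with k | k
          · left; right; exact ⟨by linarith, q2, f⟩
          · left; left; left; exact ⟨q1, k, g⟩
    · rintro (((⟨q1, q2, q3⟩ | ⟨q1, q2, q3⟩) | ⟨q1, q2, q3⟩) | ⟨q1, q2, q3⟩)
      · refine ⟨q1, ?_, ?_⟩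
        · refine nonneg_of_mul_nonneg_right (a := (a : ℝ) * b * ((a : ℝ) ^ 2 + b ^ 2 + a * b)) ?_ (by positivity)
          rw [i1x]; positivity
        · refine nonneg_of_mul_nonneg_right (a := (a : ℝ) * b * ((a : ℝ) ^ 2 + b ^ 2 + a * b)) ?_ (by positivity)
          rw [i1y]; positivity
      · refine ⟨?_, q1, q2⟩
        refine nonneg_of_mul_nonneg_right (a := (2 : ℝ)) ?_ (by positivity)
        rw [iF]; positivity
      · refine ⟨by rw [i3T]; positivity, q2, ?_⟩
        refine nonneg_of_mul_nonneg_right (a := (a : ℝ) ^ 3 * b) ?_ (by positivity)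
        rw [i3y]; positivity
      · refine ⟨by rw [i2T]; positivity, ?_, q3⟩
        refine nonneg_of_mul_nonneg_right (a := (a : ℝ) * b ^ 3) ?_ (by positivity)
        rw [i2x]; positivity

end main

theorem num (a b c : ℕ) (ha : 0 < a) (hb : 0 < b)
    (h : c ^ 2 = a ^ 2 + b ^ 2 + a * b) (m : ℕ) (hm : (b : ℤ) * c - b - c < (m : ℤ)) :
    0 < m ∧ a ^ 2 + b ^ 2 + a * b + a + b ≤ (2 * m / 3) * (a * b) := by
  have key : ∀ a b : ℕ, 0 < a → 0 < b → c ^ 2 = a ^ 2 + b ^ 2 + a * b → 3 ≤ a := by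
    intro a b ha hb h
    by_contra hlt
    have : a = 1 ∨ a = 2 := by omega
    rcases this with rfl | rfl
    · have h1 : b < c := by nlinarith
      have h2 : c < b + 1 := by nlinarith
      omega
    · have h1 : b + 1 < c := by nlinarith
      have h2 : c < b + 2 := by nlinarith
      omega
  have ha3 := key a b ha hb h
  have hb3 := key b a hb ha (by rw [h]; ring)
  have hca : a < c := by nlinarith
  have hcb : c < a + b := by nlinarith
  have h1 : 3 * (2 * m / 3) + 2 ≥ 2 * m := by omega
  generalize 2 * m / 3 = k at *
  have hm1 : 2 * c - 3 + 1 ≤ m := by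
    zify [show 3 ≤ 2 * c by omega]
    have : (3 : ℤ) ≤ b := by exact_mod_cast hb3
    have : (3 : ℤ) < c := by omega
    nlinarith
  refine ⟨by omega, ?_⟩
  have h2 : 2 * (2 * c - 3) ≤ 3 * k := by omega
  obtain ⟨d, rfl⟩ : ∃ d, c = d + 3 := ⟨c - 3, by omega⟩
  have h3 : 3 * (a + b) ≤ 2 * (a * b) := by nlinarith
  have h4 : 2 * d + 3 = 2 * (d + 3) - 3 := by omega
  rw [← h4] at h2
  have h5 : (2 * (2 * d + 3)) * (a * b) ≤ (3 * k) * (a * b) := Nat.mul_le_mul_right _ h2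
  have h6 : (2 * d + 3) * (3 * (a + b)) ≤ (2 * d + 3) * (2 * (a * b)) := Nat.mul_le_mul_left _ h3
  have h7 : (d + 3) * (d + 3) ≤ (d + 3) * (a + b) := Nat.mul_le_mul_left _ hcb.le
  have h8 : (d + 4) * (a + b) ≤ (2 * d + 3) * (a + b) := Nat.mul_le_mul_right _ (by omega)
  nlinarith

theorem fin_til (a b c : ℕ) (ha : 0 < a) (hb : 0 < b) (hab : Nat.Coprime a b)
    (h : c ^ 2 = a ^ 2 + b ^ 2 + a * b) (m : ℕ) (hm : (b : ℤ) * c - b - c < (m : ℤ)) :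
    0 < m ∧ Til a b c (convexHull ℝ {(((b : ℝ) * (b + 2 * a) * m, 0) : ℝ × ℝ),
      (0, (a : ℝ) * (a + 2 * b) * m), (0, 0)})
      ((a + 2 * b) * (b + 2 * a) * m ^ 2 * (a * b)) := by
  obtain ⟨h0, h1⟩ := num a b c ha hb h m hm
  have h' : (c:ℝ)^2 = a^2+b^2+a*b := by exact_mod_cast h
  refine ⟨h0, bigT a b c ha hb h' m h0 ?_⟩
  obtain ⟨k3, hk⟩ : ∃ k3, 2 * m = 2 * m / 3 + 2 * m / 3 + k3 := ⟨2 * m - 2 * m / 3 - 2 * m / 3, by omega⟩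
  refine eq3 a b c ha hb hab h' (2 * m / 3) (2 * m / 3) k3 h1 h1
    (h1.trans (Nat.mul_le_mul_right _ (by omega))) _ ?_
  have hk' : (2 : ℝ) * m = (2 * m / 3 : ℕ) + (2 * m / 3 : ℕ) + k3 := by exact_mod_cast hk
  rw [← hk']; ring

theorem nsq (u v : Plane) (x y : ℝ) :
    ‖x • u + y • v‖ ^ 2 = ‖u‖ ^ 2 * x ^ 2 + ‖v‖ ^ 2 * y ^ 2
      + (‖u‖ ^ 2 + ‖v‖ ^ 2 - ‖u - v‖ ^ 2) * x * y := by
  rw [norm_add_sq_real, norm_sub_sq_real, norm_smul, norm_smul, inner_smul_left, inner_smul_right,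
    mul_pow, mul_pow, Real.norm_eq_abs, Real.norm_eq_abs, sq_abs, sq_abs]
  simp only [conj_trivial]
  ring

theorem fr_dist (O u v : Plane) (p q : ℝ × ℝ) :
    dist (fr O u v p) (fr O u v q) ^ 2 = ‖u‖ ^ 2 * (p.1 - q.1) ^ 2 + ‖v‖ ^ 2 * (p.2 - q.2) ^ 2
      + (‖u‖ ^ 2 + ‖v‖ ^ 2 - ‖u - v‖ ^ 2) * (p.1 - q.1) * (p.2 - q.2) := by
  rw [← nsq, dist_eq_norm, fr_apply, fr_apply]
  congr 2
  module

theorem fr_hull (O u v : Plane) (P Q R : ℝ × ℝ) :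
    fr O u v '' convexHull ℝ {P, Q, R} = convexHull ℝ {fr O u v P, fr O u v Q, fr O u v R} := by
  rw [AffineMap.image_convexHull, Set.image_insert_eq, Set.image_pair]

theorem fr_bij (O u v : Plane) (hi : Function.Injective (fr O u v)) :
    Function.Bijective (fr O u v) := by
  refine ⟨hi, ?_⟩
  have h1 : Function.Injective (fr O u v).linear := (AffineMap.linear_injective_iff _).2 hi
  rw [← AffineMap.linear_surjective_iff]
  refine (LinearMap.injective_iff_surjective_of_finrank_eq_finrank ?_).1 h1
  simp

/-- any two tiles are congruent -/
theorem sss {a b c : ℝ} (ha : 0 < a) (hb : 0 < b) (h : c ^ 2 = a ^ 2 + b ^ 2 + a * b)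
    (P Q R P' Q' R' : Plane) (h1 : dist Q R = a) (h2 : dist P R = b) (h3 : dist P Q = c)
    (h1' : dist Q' R' = a) (h2' : dist P' R' = b) (h3' : dist P' Q' = c) :
    ∃ f : Plane ≃ᵢ Plane, f '' convexHull ℝ {P, Q, R} = convexHull ℝ {P', Q', R'} := by
  have gen : ∀ P Q R : Plane, dist Q R = a → dist P R = b → dist P Q = c →
      (∀ p q, dist (fr R (P - R) (Q - R) p) (fr R (P - R) (Q - R) q) ^ 2 =
        b ^ 2 * (p.1 - q.1) ^ 2 + a ^ 2 * (p.2 - q.2) ^ 2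
        + (b ^ 2 + a ^ 2 - c ^ 2) * (p.1 - q.1) * (p.2 - q.2)) ∧
      fr R (P - R) (Q - R) '' convexHull ℝ {((1, 0) : ℝ × ℝ), (0, 1), (0, 0)}
        = convexHull ℝ {P, Q, R} := by
    intro P Q R h1 h2 h3
    constructor
    · intro p q
      rw [fr_dist, sub_sub_sub_cancel_right, ← dist_eq_norm, ← dist_eq_norm, ← dist_eq_norm, h1, h2, h3]
    · rw [fr_hull]; simp [fr_apply]
  have inj : ∀ P Q R : Plane, dist Q R = a → dist P R = b → dist P Q = c →
      Function.Injective (fr R (P - R) (Q - R)) := by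
    intro P Q R h1 h2 h3 p q hpq
    have := (gen P Q R h1 h2 h3).1 p q
    rw [hpq, dist_self, h] at this
    have e : (2 * b * (p.1 - q.1) - a * (p.2 - q.2)) ^ 2 + 3 * a ^ 2 * (p.2 - q.2) ^ 2 = 0 := by
      linear_combination -4 * this
    have e2 : a ^ 2 * (p.2 - q.2) ^ 2 = 0 := by
      have : 0 ≤ a ^ 2 * (p.2 - q.2) ^ 2 := by positivity
      nlinarith [sq_nonneg (2 * b * (p.1 - q.1) - a * (p.2 - q.2))]
    have e3 : p.2 - q.2 = 0 := by
      rcases mul_eq_zero.1 e2 with h | h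
      · exact absurd h (by positivity)
      · exact pow_eq_zero_iff (two_ne_zero) |>.1 h
    rw [e3] at e
    have e4 : p.1 - q.1 = 0 := by
      have e5 : (2 * b * (p.1 - q.1)) ^ 2 = 0 := by linear_combination e
      have e6 := pow_eq_zero_iff (two_ne_zero) |>.1 e5
      rcases mul_eq_zero.1 e6 with h | h
      · exact absurd h (by positivity)
      · exact h
    ext <;> linarith
  obtain ⟨d1, i1⟩ := gen P Q R h1 h2 h3
  obtain ⟨d2, i2⟩ := gen P' Q' R' h1' h2' h3'
  have b1 := fr_bij _ _ _ (inj P Q R h1 h2 h3)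
  have b2 := fr_bij _ _ _ (inj P' Q' R' h1' h2' h3')
  let E1 := Equiv.ofBijective _ b1
  let E2 := Equiv.ofBijective _ b2
  refine ⟨IsometryEquiv.mk (E1.symm.trans E2) ?_, ?_⟩
  · refine Isometry.of_dist_eq ?_
    intro x y
    obtain ⟨p, rfl⟩ := E1.surjective x
    obtain ⟨q, rfl⟩ := E1.surjective y
    refine (pow_left_inj₀ dist_nonneg dist_nonneg two_ne_zero).1 ?_
    simp only [Equiv.toFun_as_coe, Equiv.trans_apply, Equiv.symm_apply_apply]
    exact (d2 p q).trans (d1 p q).symm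
  · rw [← i1, ← i2, ← Set.image_comp]
    refine Set.image_congr fun p _ => ?_
    show E2 (E1.symm (E1 p)) = E2 p
    rw [Equiv.symm_apply_apply]

theorem transfer (a b c : ℕ) (ha : 0 < a) (hb : 0 < b) (h : (c : ℝ) ^ 2 = a ^ 2 + b ^ 2 + a * b)
    (m : ℕ) (hm : 0 < m) (hT : Til a b c (convexHull ℝ {(((b : ℝ) * (b + 2 * a) * m, 0) : ℝ × ℝ),
      (0, (a : ℝ) * (a + 2 * b) * m), (0, 0)})
      ((a + 2 * b) * (b + 2 * a) * m ^ 2 * (a * b))) (P Q R : Plane)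
    (h1 : dist Q R = (a : ℝ) * (a + 2 * b) * m) (h2 : dist P R = (b : ℝ) * (b + 2 * a) * m)
    (h3 : dist P Q = (c : ℝ) ^ 2 * m) :
    TilesInto (convexHull ℝ {P, Q, R}) ((a + 2 * b) * (b + 2 * a) * m ^ 2) a b c := by
  have ha' : (0 : ℝ) < a := by exact_mod_cast ha
  have hb' : (0 : ℝ) < b := by exact_mod_cast hb
  have hm' : (0 : ℝ) < m := by exact_mod_cast hm
  obtain ⟨ι, _, A, B, C, hs, hD, hv, hcard⟩ := hT
  have hN : Fintype.card ι = (a + 2 * b) * (b + 2 * a) * m ^ 2 := by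
    have : (Fintype.card ι : ℝ) = (a + 2 * b) * (b + 2 * a) * m ^ 2 :=
      mul_right_cancel₀ (by positivity : (a : ℝ) * b ≠ 0) hcard
    exact_mod_cast this
  set s : ℝ := (b : ℝ) * (b + 2 * a) * m with hsdef
  set t : ℝ := (a : ℝ) * (a + 2 * b) * m with htdef
  have hs0 : 0 < s := by positivity
  have ht0 : 0 < t := by positivity
  set u : Plane := s⁻¹ • (P - R) with hu
  set v : Plane := t⁻¹ • (Q - R) with hvv
  have nu : ‖u‖ = 1 := by
    rw [hu, norm_smul, ← dist_eq_norm, h2, Real.norm_of_nonneg (by positivity)]; field_simp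
  have nv : ‖v‖ = 1 := by
    rw [hvv, norm_smul, ← dist_eq_norm, h1, Real.norm_of_nonneg (by positivity)]; field_simp
  have su : s • u = P - R := by rw [hu, smul_smul, mul_inv_cancel₀ hs0.ne', one_smul]
  have tv : t • v = Q - R := by rw [hvv, smul_smul, mul_inv_cancel₀ ht0.ne', one_smul]
  have nuv : ‖u - v‖ ^ 2 = 1 := by
    have := nsq u v s (-t)
    rw [neg_smul, su, tv, ← sub_eq_add_neg, sub_sub_sub_cancel_right, ← dist_eq_norm, h3, nu, nv] at this
    have e : s * t * (‖u - v‖ ^ 2 - 1) = 0 := by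
      have e2 : ((c : ℝ) ^ 2 * m) ^ 2 = s ^ 2 + t ^ 2 - s * t := by
        rw [h, hsdef, htdef]; ring
      rw [e2] at this
      linear_combination -this
    rcases mul_eq_zero.1 e with h | h
    · exact absurd h (by positivity)
    · linarith
  have hd : ∀ p q, dist (fr R u v p) (fr R u v q) ^ 2 = qf (p - q) := by
    intro p q
    rw [fr_dist, nu, nv, nuv]; simp only [qf, Prod.fst_sub, Prod.snd_sub]; ring
  have hd' : ∀ p q (x : ℕ), qf (p - q) = (x : ℝ) ^ 2 → dist (fr R u v p) (fr R u v q) = x := by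
    intro p q x hx
    rw [← hd] at hx
    exact (pow_left_inj₀ dist_nonneg (by positivity) two_ne_zero).1 hx
  have inj : Function.Injective (fr R u v) := by
    intro p q hpq
    have := hd p q
    rw [hpq, dist_self] at this
    simp only [qf, Prod.fst_sub, Prod.snd_sub] at this
    have e1 : (p.1 - q.1) ^ 2 = 0 := by
      nlinarith [sq_nonneg (p.1 - q.1), sq_nonneg ((p.1 - q.1) + 2 * (p.2 - q.2))]
    have e2 : (p.2 - q.2) ^ 2 = 0 := by
      nlinarith [sq_nonneg (p.2 - q.2), sq_nonneg ((p.2 - q.2) + 2 * (p.1 - q.1))]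
    have e1 := pow_eq_zero_iff (two_ne_zero) |>.1 e1
    have e2 := pow_eq_zero_iff (two_ne_zero) |>.1 e2
    ext <;> linarith
  have hcont : Continuous (fr R u v) := AffineMap.continuous_of_finiteDimensional _
  have hPQR : convexHull ℝ {P, Q, R} = ⋃ i, fr R u v '' convexHull ℝ {A i, B i, C i} := by
    rw [← Set.image_iUnion, ← hD, fr_hull]
    simp only [fr_apply, su, tv]; simp
  have hsd : ∀ i, dist (fr R u v (B i)) (fr R u v (C i)) = a ∧ dist (fr R u v (A i)) (fr R u v (C i)) = b
      ∧ dist (fr R u v (A i)) (fr R u v (B i)) = c := fun i =>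
    ⟨hd' _ _ _ (hs i).1, hd' _ _ _ (hs i).2.1, hd' _ _ _ (hs i).2.2⟩
  have hpos : 0 < Fintype.card ι := by rw [hN]; positivity
  obtain ⟨i0⟩ : Nonempty ι := Fintype.card_pos_iff.1 hpos
  have hf : ∀ i, ∃ f : Plane ≃ᵢ Plane, f '' (fr R u v '' convexHull ℝ {A i0, B i0, C i0})
      = fr R u v '' convexHull ℝ {A i, B i, C i} := by
    intro i
    rw [fr_hull, fr_hull]
    exact sss ha' hb' h _ _ _ _ _ _ (hsd i0).1 (hsd i0).2.1 (hsd i0).2.2 (hsd i).1 (hsd i).2.1 (hsd i).2.2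
  choose f hf using hf
  have g : Fin ((a + 2 * b) * (b + 2 * a) * m ^ 2) ≃ ι := (finCongr hN.symm).trans (Fintype.equivFin ι).symm
  refine ⟨fun i => f (g i), fr R u v '' convexHull ℝ {A i0, B i0, C i0},
    ⟨_, _, _, (hsd i0).1, (hsd i0).2.1, (hsd i0).2.2, fr_hull _ _ _ _ _ _⟩, ?_, ?_⟩
  · rw [hPQR]
    simp only [hf]
    exact (g.surjective.iUnion_comp (fun i => fr R u v '' convexHull ℝ {A i, B i, C i})).symm
  · intro i j hij
    simp only [hf]
    have hne : g i ≠ g j := fun e => hij (g.injective e)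
    generalize g i = i at *
    generalize g j = j at *
    have hvol := hv i j hne
    set U := interior (fr R u v '' convexHull ℝ {A i, B i, C i}) ∩
      interior (fr R u v '' convexHull ℝ {A j, B j, C j}) with hU
    have hUo : IsOpen U := isOpen_interior.inter isOpen_interior
    have hsub : U ⊆ fr R u v '' (convexHull ℝ {A i, B i, C i} ∩ convexHull ℝ {A j, B j, C j}) := by
      rw [Set.image_inter inj]
      exact Set.inter_subset_inter interior_subset interior_subset
    have hpre : fr R u v ⁻¹' U ⊆ convexHull ℝ {A i, B i, C i} ∩ convexHull ℝ {A j, B j, C j} := by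
      intro p hp
      obtain ⟨q, hq, e⟩ := hsub hp
      rw [← inj e]; exact hq
    have h0 : (fr R u v ⁻¹' U) = ∅ :=
      ((hUo.preimage hcont).measure_eq_zero_iff volume).1 (measure_mono_null hpre hvol)
    by_contra hne
    obtain ⟨x, hx⟩ := Set.nonempty_iff_ne_empty.2 hne
    obtain ⟨q, hq, rfl⟩ := hsub hx
    have : q ∈ fr R u v ⁻¹' U := hx
    rw [h0] at this
    exact this

end TT

theorem stmt11 (a b c : ℕ) (ha : 0 < a) (hb : 0 < b) (hc : 0 < c)
    (hab : Nat.Coprime a b) (hac : Nat.Coprime a c) (hbc : Nat.Coprime b c)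
    (h : c ^ 2 = a ^ 2 + b ^ 2 + a * b)
    (m : ℕ) (hm : (b : ℤ) * c - b - c < (m : ℤ)) :
    ∀ Δ : Set Plane,
      IsTriangle ((a : ℝ) * (a + 2 * b) * m) ((b : ℝ) * (b + 2 * a) * m)
        ((c : ℝ) ^ 2 * m) Δ →
      TilesInto Δ ((a + 2 * b) * (b + 2 * a) * m ^ 2) a b c := by
  rintro Δ ⟨P, Q, R, h1, h2, h3, rfl⟩
  obtain ⟨h0, hT⟩ := TT.fin_til a b c ha hb hab h m hm
  exact TT.transfer a b c ha hb (by exact_mod_cast h) m h0 hT P Q R h1 h2 h3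
end
end

section
/- Let a, b, c be pairwise coprime positive integers with c² = a² + b² + ab, and let m be a positive integer such that the equilateral triangle with side length m·ab tiles into m²·ab congruent copies of the triangle with side lengths (a, b, c). Then the isosceles triangle with side lengths (m·b·c, m·b·c, m·b·(a+2b)) tiles into m²·b·(a+2b) congruent copies of the triangle with side lengths (a, b, c). -/
noncomputable section

/-- The equilateral triangle with side length `X`. -/
def EquilateralTri (X : ℝ) : Set Plane :=
  convexHull ℝ {pt 0 0, pt X 0, pt (X/2) (X * Real.sqrt 3 / 2)}


lemma dist_sq' (X Y : Plane) : dist X Y ^ 2 = (X 0 - Y 0)^2 + (X 1 - Y 1)^2 := by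
  rw [EuclideanSpace.dist_eq, Real.sq_sqrt (by positivity)]
  simp [Fin.sum_univ_two, Real.dist_eq, sq_abs]

lemma dist_of_sq {X Y : Plane} {r : ℝ} (hr : 0 ≤ r)
    (h : (X 0 - Y 0)^2 + (X 1 - Y 1)^2 = r ^ 2) : dist X Y = r := by
  rw [← dist_sq'] at h
  exact (sq_eq_sq₀ dist_nonneg hr).1 h

@[simp] lemma pt_zero (x y : ℝ) : (pt x y) 0 = x := by simp [pt]
@[simp] lemma pt_one (x y : ℝ) : (pt x y) 1 = y := by simp [pt]

lemma plane_ext {X Y : Plane} (h0 : X 0 = Y 0) (h1 : X 1 = Y 1) : X = Y := by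
  ext i; fin_cases i <;> assumption

/-- canonical position -/
lemma canon (P Q R : Plane) (hr : 0 < dist P Q) :
    ∃ (f : Plane ≃ᵢ Plane) (x y : ℝ), 0 ≤ y ∧ f P = pt 0 0 ∧ f Q = pt (dist P Q) 0 ∧
      f R = pt x y := by
  obtain ⟨r, hrr⟩ : ∃ r, r = dist P Q := ⟨_, rfl⟩
  have h2 := dist_sq' P Q
  rw [← hrr] at hr h2 ⊢
  obtain ⟨u, hu⟩ : ∃ u, u = (Q 0 - P 0) / r := ⟨_, rfl⟩
  obtain ⟨w, hw⟩ : ∃ w, w = (Q 1 - P 1) / r := ⟨_, rfl⟩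
  have hr0 : r ≠ 0 := hr.ne'
  have huw : u ^ 2 + w ^ 2 = 1 := by
    rw [hu, hw]; field_simp; linarith
  obtain ⟨e, he, hey⟩ : ∃ e : ℝ, e ^ 2 = 1 ∧
      0 ≤ e * (u * (R 1 - P 1) - w * (R 0 - P 0)) := by
    rcases le_total 0 (u * (R 1 - P 1) - w * (R 0 - P 0)) with h | h
    · exact ⟨1, by norm_num, by linarith⟩
    · exact ⟨-1, by norm_num, by linarith⟩
  let F : Plane → Plane := fun X => pt (u * (X 0 - P 0) + w * (X 1 - P 1))
    (e * (u * (X 1 - P 1) - w * (X 0 - P 0)))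
  let G : Plane → Plane := fun Y => pt (P 0 + u * Y 0 - e * w * Y 1)
    (P 1 + w * Y 0 + e * u * Y 1)
  have hFG : ∀ Y, F (G Y) = Y := by
    intro Y
    apply plane_ext
    · simp only [F, G, pt_zero, pt_one]; linear_combination (Y 0) * huw
    · simp only [F, G, pt_zero, pt_one]
      linear_combination (Y 1) * e ^ 2 * huw + (Y 1) * he
  have hiso : Isometry F := by
    apply Isometry.of_dist_eq
    intro X Y
    apply dist_of_sq dist_nonneg
    rw [dist_sq']
    simp only [F, pt_zero, pt_one]
    linear_combination ((X 0 - Y 0)^2 + (X 1 - Y 1)^2) * huw +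
      (u * (X 1 - Y 1) - w * (X 0 - Y 0)) ^ 2 * he
  refine ⟨IsometryEquiv.mk' F G hFG hiso, u * (R 0 - P 0) + w * (R 1 - P 1), _, hey, ?_, ?_, rfl⟩
  · change F P = _
    apply plane_ext <;> simp [F]
  · change F Q = _
    have e0 : Q 0 - P 0 = r * u := by rw [hu]; field_simp
    have e1 : Q 1 - P 1 = r * w := by rw [hw]; field_simp
    apply plane_ext <;> simp only [F, pt_zero, pt_one, e0, e1]
    · linear_combination r * huw
    · ring

lemma image_hull (f : Plane ≃ᵢ Plane) (P Q R : Plane) :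
    f '' convexHull ℝ {P, Q, R} = convexHull ℝ {f P, f Q, f R} := by
  have := f.toRealAffineIsometryEquiv.toAffineEquiv.toAffineMap.image_convexHull {P, Q, R}
  simpa [Set.image_insert_eq] using this

lemma sss {p q r : ℝ} (hr : 0 < r) {S T : Set Plane} (hS : IsTriangle p q r S)
    (hT : IsTriangle p q r T) : ∃ f : Plane ≃ᵢ Plane, f '' S = T := by
  obtain ⟨P, Q, R, h1, h2, h3, rfl⟩ := hS
  obtain ⟨P', Q', R', h1', h2', h3', rfl⟩ := hT
  obtain ⟨f, x, y, hy, fP, fQ, fR⟩ := canon P Q R (h3 ▸ hr)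
  obtain ⟨g, x', y', hy', gP, gQ, gR⟩ := canon P' Q' R' (h3' ▸ hr)
  rw [h3] at fQ
  rw [h3'] at gQ
  have a1 := f.dist_eq Q R
  have a2 := f.dist_eq P R
  have b1 := g.dist_eq Q' R'
  have b2 := g.dist_eq P' R'
  rw [fQ, fR, h1] at a1
  rw [fP, fR, h2] at a2
  rw [gQ, gR, h1'] at b1
  rw [gP, gR, h2'] at b2
  have a1 := congrArg (· ^ 2) a1
  have a2 := congrArg (· ^ 2) a2
  have b1 := congrArg (· ^ 2) b1
  have b2 := congrArg (· ^ 2) b2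
  simp only [dist_sq', pt_zero, pt_one] at a1 a2 b1 b2
  have hx : x = x' := by
    have : r * (x - x') = 0 := by linear_combination (a2 - a1 - b2 + b1) / 2
    rcases mul_eq_zero.1 this with h | h <;> linarith
  subst hx
  have hyy : y = y' := by
    apply (sq_eq_sq₀ hy hy').1
    linarith
  subst hyy
  refine ⟨f.trans g.symm, ?_⟩
  rw [image_hull]
  simp only [IsometryEquiv.trans_apply, fP, fQ, fR, ← gP, ← gQ, ← gR,
    IsometryEquiv.symm_apply_apply]

lemma isTriangle_image {p q r : ℝ} {S : Set Plane} (f : Plane ≃ᵢ Plane)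
    (hS : IsTriangle p q r S) : IsTriangle p q r (f '' S) := by
  obtain ⟨P, Q, R, h1, h2, h3, rfl⟩ := hS
  exact ⟨f P, f Q, f R, (f.dist_eq _ _).trans h1, (f.dist_eq _ _).trans h2,
    (f.dist_eq _ _).trans h3, image_hull f P Q R⟩

def Tl (p q r : ℝ) (S : Set Plane) (N : ℕ) : Prop :=
  ∃ (ι : Type) (_ : Fintype ι) (g : ι → Set Plane), Fintype.card ι = N ∧
    (∀ i, IsTriangle p q r (g i)) ∧ S = ⋃ i, g i ∧
    ∀ i j, i ≠ j → interior (g i) ∩ interior (g j) = ∅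

lemma TilesInto.tl {p q r : ℝ} {S : Set Plane} {N : ℕ} (h : TilesInto S N p q r) :
    Tl p q r S N := by
  obtain ⟨f, D, hD, hS, hd⟩ := h
  exact ⟨Fin N, inferInstance, fun i => f i '' D, by simp, fun i => isTriangle_image _ hD, hS, hd⟩

lemma Tl.image {p q r : ℝ} {S : Set Plane} {N : ℕ} (h : Tl p q r S N) (f : Plane ≃ᵢ Plane) :
    Tl p q r (f '' S) N := by
  obtain ⟨ι, _, g, hc, ht, hS, hd⟩ := h
  refine ⟨ι, inferInstance, fun i => f '' g i, hc, fun i => isTriangle_image _ (ht i), ?_, ?_⟩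
  · rw [hS, Set.image_iUnion]
  · intro i j hij
    have e : ∀ s : Set Plane, interior (f '' s) = f '' interior s := fun s =>
      (f.toHomeomorph.image_interior s).symm
    rw [e, e, ← Set.image_inter f.injective, hd i j hij, Set.image_empty]

lemma Tl.tilesInto {p q r : ℝ} {S : Set Plane} {N : ℕ} (h : Tl p q r S N) (hr : 0 < r)
    (hN : 0 < N) : TilesInto S N p q r := by
  obtain ⟨ι, _, g, hc, ht, hS, hd⟩ := h
  let e : ι ≃ Fin N := Fintype.equivFinOfCardEq hc
  let D := g (e.symm ⟨0, hN⟩)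
  have hD : IsTriangle p q r D := ht _
  choose F hF using fun i => sss hr hD (ht i)
  refine ⟨fun k => F (e.symm k), D, hD, ?_, ?_⟩
  · simp only [hF]
    rw [hS]
    exact (e.symm.surjective.iUnion_comp g).symm
  · intro i j hij
    simp only [hF]
    exact hd _ _ (fun h => hij (e.symm.injective h))

lemma Tl.union {p q r : ℝ} {S T : Set Plane} {N M : ℕ} (h : Tl p q r S N) (h' : Tl p q r T M)
    (hST : interior S ∩ interior T = ∅) : Tl p q r (S ∪ T) (N + M) := by
  obtain ⟨ι, _, g, hc, ht, rfl, hd⟩ := h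
  obtain ⟨κ, _, k, hc', ht', rfl, hd'⟩ := h'
  have key : ∀ i j, interior (g i) ∩ interior (k j) = ∅ := by
    intro i j
    apply Set.subset_empty_iff.1
    rw [← hST]
    exact Set.inter_subset_inter (interior_mono (Set.subset_iUnion g i))
      (interior_mono (Set.subset_iUnion k j))
  refine ⟨ι ⊕ κ, inferInstance, Sum.elim g k, by simp [hc, hc'], ?_, ?_, ?_⟩
  · rintro (i | j)
    · exact ht i
    · exact ht' j
  · rw [Set.iUnion_sum]; rfl
  · rintro (i | i) (j | j) hij
    · exact hd i j (fun h => hij (by rw [h]))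
    · exact key i j
    · rw [Set.inter_comm]; exact key j i
    · exact hd' i j (fun h => hij (by rw [h]))

lemma interior_move {S : Set Plane} {X : Plane} (hX : X ∈ interior S) (u : Plane) :
    ∃ d : ℝ, 0 < d ∧ X + d • u ∈ S := by
  have hc : Continuous (fun d : ℝ => X + d • u) := by fun_prop
  have hn : ∀ᶠ d in nhds (0:ℝ), X + d • u ∈ S := by
    apply hc.continuousAt.eventually
    simpa using mem_interior_iff_mem_nhds.1 hX
  obtain ⟨e, he, h⟩ := Metric.eventually_nhds_iff.1 hn
  refine ⟨e / 2, by linarith, h ?_⟩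
  rw [Real.dist_eq, sub_zero, abs_of_pos] <;> linarith

lemma hull_mem (A v w X : Plane) : X ∈ convexHull ℝ {A, A + v, A + w} ↔
    ∃ s t : ℝ, 0 ≤ s ∧ 0 ≤ t ∧ s + t ≤ 1 ∧ X = A + s • v + t • w := by
  rw [convexHull_insert (by simp), convexHull_pair]
  simp only [convexJoin_singleton_left, Set.mem_iUnion, exists_prop]
  constructor
  · rintro ⟨Y, ⟨a, b, ha, hb, hab, rfl⟩, c, d, hc, hd, hcd, rfl⟩
    refine ⟨d * a, d * b, by positivity, by positivity, by nlinarith, ?_⟩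
    obtain rfl : a = 1 - b := by linarith
    obtain rfl : c = 1 - d := by linarith
    module
  · rintro ⟨s, t, hs, ht, hst, rfl⟩
    rcases (add_nonneg hs ht).eq_or_lt' with h | h
    · have h1 : s = 0 := by linarith
      have h2 : t = 0 := by linarith
      exact ⟨A + v, left_mem_segment _ _ _, by simp [h1, h2, left_mem_segment]⟩
    · refine ⟨_, ⟨s / (s + t), t / (s + t), by positivity, by positivity, by field_simp, rfl⟩,
        1 - (s + t), s + t, by linarith, by linarith, by ring, ?_⟩
      apply plane_ext <;> simp <;> field_simp <;> ring

lemma coord_unique {v w : Plane} (hd : v 0 * w 1 - v 1 * w 0 ≠ 0) {A : Plane} {s t s' t' : ℝ}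
    (h : A + s • v + t • w = A + s' • v + t' • w) : s = s' ∧ t = t' := by
  have h0 := congrArg (fun X : Plane => X 0) h
  have h1 := congrArg (fun X : Plane => X 1) h
  simp at h0 h1
  constructor
  · have : (s - s') * (v 0 * w 1 - v 1 * w 0) = 0 := by
      linear_combination w 1 * h0 - w 0 * h1
    rcases mul_eq_zero.1 this with h | h
    · linarith
    · exact absurd h hd
  · have : (t - t') * (v 0 * w 1 - v 1 * w 0) = 0 := by
      linear_combination v 0 * h1 - v 1 * h0
    rcases mul_eq_zero.1 this with h | h
    · linarith
    · exact absurd h hd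

lemma interior_hull {A v w X : Plane} (hd : v 0 * w 1 - v 1 * w 0 ≠ 0)
    (hX : X ∈ interior (convexHull ℝ {A, A + v, A + w})) :
    ∃ s t : ℝ, 0 < s ∧ 0 < t ∧ s + t < 1 ∧ X = A + s • v + t • w := by
  obtain ⟨s, t, hs, ht, hst, rfl⟩ := (hull_mem A v w X).1 (interior_subset hX)
  refine ⟨s, t, ?_, ?_, ?_, rfl⟩
  · obtain ⟨d, hd0, hm⟩ := interior_move hX (-v)
    obtain ⟨s', t', hs', ht', hst', he⟩ := (hull_mem A v w _).1 hm
    have := (coord_unique hd (s := s - d) (t := t) (by rw [← he]; module)).1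
    linarith
  · obtain ⟨d, hd0, hm⟩ := interior_move hX (-w)
    obtain ⟨s', t', hs', ht', hst', he⟩ := (hull_mem A v w _).1 hm
    have := (coord_unique hd (s := s) (t := t - d) (by rw [← he]; module)).2
    linarith
  · obtain ⟨d, hd0, hm⟩ := interior_move hX v
    obtain ⟨s', t', hs', ht', hst', he⟩ := (hull_mem A v w _).1 hm
    have := coord_unique hd (s := s + d) (t := t) (by rw [← he]; module)
    linarith [this.1, this.2]

lemma half_hull {P Q R : Plane} (α β γ : ℝ) (hP : α * P 0 + β * P 1 ≤ γ)
    (hQ : α * Q 0 + β * Q 1 ≤ γ) (hR : α * R 0 + β * R 1 ≤ γ) {X : Plane}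
    (hX : X ∈ convexHull ℝ {P, Q, R}) : α * X 0 + β * X 1 ≤ γ := by
  have e1 : Q = P + (Q - P) := by module
  have e2 : R = P + (R - P) := by module
  rw [e1, e2, hull_mem] at hX
  obtain ⟨s, t, hs, ht, hst, rfl⟩ := hX
  simp
  nlinarith [mul_le_mul_of_nonneg_left hQ hs, mul_le_mul_of_nonneg_left hR ht,
    mul_le_mul_of_nonneg_left hP (sub_nonneg.2 hst)]

lemma disj_of_half {S T : Set Plane} (α β γ : ℝ) (hne : 0 < α ^ 2 + β ^ 2)
    (hS : ∀ X ∈ S, α * X 0 + β * X 1 ≤ γ) (hT : ∀ X ∈ T, γ ≤ α * X 0 + β * X 1) :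
    interior S ∩ interior T = ∅ := by
  apply Set.eq_empty_of_forall_notMem
  rintro X ⟨h1, h2⟩
  obtain ⟨d, hd, hm⟩ := interior_move h1 (pt α β)
  have := hS _ hm
  have h3 := hT _ (interior_subset h2)
  simp at this
  nlinarith [mul_pos hd hne]

lemma split_tl {p q r : ℝ} {A B C D : Plane} {N M : ℕ} {l : ℝ} (h0 : 0 ≤ l) (h1 : l ≤ 1)
    (hD : D = A + l • (B - A)) (hDC : 0 < dist D C)
    (hN : Tl p q r (convexHull ℝ {A, D, C}) N) (hM : Tl p q r (convexHull ℝ {D, B, C}) M) :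
    Tl p q r (convexHull ℝ {A, B, C}) (N + M) := by
  have hcov : convexHull ℝ {A, B, C} = convexHull ℝ {A, D, C} ∪ convexHull ℝ {D, B, C} := by
    have hDm : D ∈ segment ℝ A B := ⟨1 - l, l, by linarith, h0, by ring, by rw [hD]; module⟩
    apply Set.Subset.antisymm
    · rw [← convexJoin_segment_singleton, ← convexJoin_segment_singleton,
        ← convexJoin_segment_singleton, ← convexJoin_union_left]
      apply convexJoin_mono_left
      rintro X ⟨a, b, ha, hb, hab, rfl⟩
      obtain rfl : a = 1 - b := by linarith
      rcases le_total b l with h | h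
      · left
        rcases h0.eq_or_lt' with hl | hl
        · obtain rfl : b = 0 := by linarith
          simpa using left_mem_segment ℝ A D
        · refine ⟨1 - b / l, b / l, ?_, by positivity, by ring, ?_⟩
          · rw [sub_nonneg, div_le_one hl]; exact h
          · rw [hD]; apply plane_ext <;> simp <;> field_simp <;> ring
      · right
        rcases h1.eq_or_lt with hl | hl
        · obtain rfl : b = 1 := by linarith
          simpa using right_mem_segment ℝ D B
        · have hl' : 0 < 1 - l := by linarith
          refine ⟨(1 - b) / (1 - l), (b - l) / (1 - l), div_nonneg ha hl'.le,
            div_nonneg (by linarith) hl'.le, by field_simp; ring, ?_⟩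
          rw [hD]; apply plane_ext <;> simp <;> field_simp <;> ring
    · have hD' : D ∈ convexHull ℝ {A, B, C} := by
        apply convexHull_mono (s := {A, B})
        · intro x; simp; tauto
        · rwa [convexHull_pair]
      have hs := subset_convexHull ℝ ({A, B, C} : Set Plane)
      apply Set.union_subset <;> apply convexHull_min _ (convex_convexHull ℝ _) <;>
        rintro x (rfl | rfl | rfl) <;> first | exact hD' | exact hs (by simp)
  rw [hcov]
  apply hN.union hM
  have hsq : 0 < (D 0 - C 0) ^ 2 + (D 1 - C 1) ^ 2 := by
    rw [← dist_sq']; positivity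
  have d0 : D 0 = A 0 + l * (B 0 - A 0) := by rw [hD]; simp
  have d1 : D 1 = A 1 + l * (B 1 - A 1) := by rw [hD]; simp
  -- functional
  obtain ⟨k, hk⟩ : ∃ k, k = (B 0 - A 0) * (D 1 - C 1) - (B 1 - A 1) * (D 0 - C 0) := ⟨_, rfl⟩
  have fA : (D 1 - C 1) * A 0 - (D 0 - C 0) * A 1 =
      (D 1 - C 1) * D 0 - (D 0 - C 0) * D 1 - l * k := by
    rw [hk]; linear_combination -(D 1 - C 1) * d0 + (D 0 - C 0) * d1
  have fB : (D 1 - C 1) * B 0 - (D 0 - C 0) * B 1 =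
      (D 1 - C 1) * D 0 - (D 0 - C 0) * D 1 + (1 - l) * k := by
    rw [hk]; linear_combination -(D 1 - C 1) * d0 + (D 0 - C 0) * d1
  have fC : (D 1 - C 1) * C 0 - (D 0 - C 0) * C 1 =
      (D 1 - C 1) * D 0 - (D 0 - C 0) * D 1 := by ring
  rcases le_total 0 k with hk0 | hk0
  · have l1 := mul_nonneg h0 hk0
    have l2 := mul_nonneg (sub_nonneg.2 h1) hk0
    refine disj_of_half (D 1 - C 1) (-(D 0 - C 0)) ((D 1 - C 1) * D 0 - (D 0 - C 0) * D 1)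
      (by nlinarith) (fun X hX => half_hull _ _ _ ?_ ?_ ?_ hX) (fun X hX => ?_)
    · linarith
    · linarith
    · linarith
    · have := half_hull (-(D 1 - C 1)) (D 0 - C 0) (-((D 1 - C 1) * D 0 - (D 0 - C 0) * D 1))
        (by linarith) (by linarith) (by linarith) hX
      linarith
  · have l1 := mul_nonneg h0 (neg_nonneg.2 hk0)
    have l2 := mul_nonneg (sub_nonneg.2 h1) (neg_nonneg.2 hk0)
    refine disj_of_half (-(D 1 - C 1)) (D 0 - C 0) (-((D 1 - C 1) * D 0 - (D 0 - C 0) * D 1))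
      (by nlinarith) (fun X hX => half_hull _ _ _ ?_ ?_ ?_ hX) (fun X hX => ?_)
    · linarith
    · linarith
    · linarith
    · have := half_hull (D 1 - C 1) (-(D 0 - C 0)) ((D 1 - C 1) * D 0 - (D 0 - C 0) * D 1)
        (by linarith) (by linarith) (by linarith) hX
      linarith

def up (P v w : Plane) (i j : ℕ) : Set Plane :=
  convexHull ℝ {P + (i : ℝ) • v + (j : ℝ) • w, P + (i : ℝ) • v + (j : ℝ) • w + v,
    P + (i : ℝ) • v + (j : ℝ) • w + w}

def dn (P v w : Plane) (i j : ℕ) : Set Plane :=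
  convexHull ℝ {P + ((i : ℝ) + 1) • v + ((j : ℝ) + 1) • w,
    P + ((i : ℝ) + 1) • v + ((j : ℝ) + 1) • w + -v,
    P + ((i : ℝ) + 1) • v + ((j : ℝ) + 1) • w + -w}

lemma mem_up (P v w X : Plane) (i j : ℕ) : X ∈ up P v w i j ↔ ∃ s t : ℝ, i ≤ s ∧ j ≤ t ∧
    s + t ≤ i + j + 1 ∧ X = P + s • v + t • w := by
  rw [up, hull_mem]
  constructor
  · rintro ⟨s, t, hs, ht, hst, rfl⟩
    exact ⟨i + s, j + t, by linarith, by linarith, by linarith, by module⟩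
  · rintro ⟨s, t, hs, ht, hst, rfl⟩
    exact ⟨s - i, t - j, by linarith, by linarith, by linarith, by module⟩

lemma mem_dn (P v w X : Plane) (i j : ℕ) : X ∈ dn P v w i j ↔ ∃ s t : ℝ, s ≤ i + 1 ∧ t ≤ j + 1 ∧
    i + j + 1 ≤ s + t ∧ X = P + s • v + t • w := by
  rw [dn, hull_mem]
  constructor
  · rintro ⟨s, t, hs, ht, hst, rfl⟩
    exact ⟨i + 1 - s, j + 1 - t, by linarith, by linarith, by linarith, by module⟩
  · rintro ⟨s, t, hs, ht, hst, rfl⟩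
    exact ⟨i + 1 - s, j + 1 - t, by linarith, by linarith, by linarith, by module⟩

lemma int_up {P v w X : Plane} {i j : ℕ} (hd : v 0 * w 1 - v 1 * w 0 ≠ 0)
    (h : X ∈ interior (up P v w i j)) : ∃ s t : ℝ, ⌊s⌋ = i ∧ ⌊t⌋ = j ∧
    s + t < i + j + 1 ∧ X = P + s • v + t • w := by
  obtain ⟨s, t, hs, ht, hst, rfl⟩ := interior_hull hd h
  refine ⟨i + s, j + t, ?_, ?_, by linarith, by module⟩ <;> rw [Int.floor_eq_iff] <;> push_cast <;>
    constructor <;> linarith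

lemma int_dn {P v w X : Plane} {i j : ℕ} (hd : v 0 * w 1 - v 1 * w 0 ≠ 0)
    (h : X ∈ interior (dn P v w i j)) : ∃ s t : ℝ, ⌊s⌋ = i ∧ ⌊t⌋ = j ∧
    i + j + 1 < s + t ∧ X = P + s • v + t • w := by
  obtain ⟨s, t, hs, ht, hst, rfl⟩ := interior_hull (by simpa using hd) h
  refine ⟨i + 1 - s, j + 1 - t, ?_, ?_, by linarith, by module⟩ <;> rw [Int.floor_eq_iff] <;>
    push_cast <;> constructor <;> linarith

lemma scaled_tl {P v w : Plane} (hd : v 0 * w 1 - v 1 * w 0 ≠ 0) (n : ℕ) (hn : 0 < n) :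
    Tl (dist v w) ‖w‖ ‖v‖ (convexHull ℝ {P, P + (n : ℝ) • v, P + (n : ℝ) • w}) (n ^ 2) := by
  refine ⟨Fin n × Fin n, inferInstance, fun k => if k.1.1 + k.2.1 < n then up P v w k.1 k.2 else
    dn P v w (n - 1 - k.1) (n - 1 - k.2), by simp [sq], ?_, ?_, ?_⟩
  · intro k
    dsimp only
    split_ifs
    · exact ⟨_, _, _, by simp, by simp, by simp, rfl⟩
    · exact ⟨_, _, _, by simp, by simp, by simp, rfl⟩
  · have hnR : (0:ℝ) < n := by exact_mod_cast hn
    ext X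
    rw [hull_mem, Set.mem_iUnion]
    constructor
    · rintro ⟨s', t', hs', ht', hst', hX⟩
      obtain ⟨s, hs⟩ : ∃ s, s = s' * n := ⟨_, rfl⟩
      obtain ⟨t, ht⟩ : ∃ t, t = t' * n := ⟨_, rfl⟩
      have hs0 : 0 ≤ s := by rw [hs]; positivity
      have ht0 : 0 ≤ t := by rw [ht]; positivity
      have hst : s + t ≤ n := by rw [hs, ht]; nlinarith
      have hX : X = P + s • v + t • w := by rw [hX, hs, ht]; module
      have hup : ∀ i j : ℕ, i + j < n → (i:ℝ) ≤ s → (j:ℝ) ≤ t → s + t ≤ i + j + 1 →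
          ∃ k : Fin n × Fin n, X ∈ if k.1.1 + k.2.1 < n then up P v w k.1 k.2 else
            dn P v w (n - 1 - k.1) (n - 1 - k.2) := by
        intro i j hij h1 h2 h3
        refine ⟨(⟨i, by omega⟩, ⟨j, by omega⟩), ?_⟩
        rw [if_pos hij, mem_up]
        exact ⟨s, t, h1, h2, h3, hX⟩
      have f1 := Nat.floor_le hs0
      have f2 := Nat.floor_le ht0
      have g1 := Nat.lt_floor_add_one s
      have g2 := Nat.lt_floor_add_one t
      generalize ⌊s⌋₊ = i at *
      generalize ⌊t⌋₊ = j at *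
      by_cases hij : i + j < n
      · by_cases hc : s + t ≤ i + j + 1
        · exact hup i j hij f1 f2 hc
        · push Not at hc
          have hlt : i + j + 1 < n := by
            have : (i:ℝ) + j + 1 < n := by linarith
            exact_mod_cast this
          refine ⟨(⟨n - 1 - i, by omega⟩, ⟨n - 1 - j, by omega⟩), ?_⟩
          rw [if_neg (by dsimp only; omega)]
          dsimp only
          rw [show n - 1 - (n - 1 - i) = i by omega, show n - 1 - (n - 1 - j) = j by omega, mem_dn]
          exact ⟨s, t, g1.le, g2.le, hc.le, hX⟩
      · have hle : i + j ≤ n := by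
          have : (i:ℝ) + j ≤ n := by linarith
          exact_mod_cast this
        have heq : i + j = n := by omega
        have heqR : (i:ℝ) + j = n := by exact_mod_cast heq
        rcases Nat.eq_zero_or_pos i with h0 | h0
        · obtain ⟨j, rfl⟩ : ∃ j', j = j' + 1 := ⟨j - 1, by omega⟩
          push_cast at *
          exact hup i j (by omega) f1 (by linarith) (by linarith)
        · obtain ⟨i, rfl⟩ : ∃ i', i = i' + 1 := ⟨i - 1, by omega⟩
          push_cast at *
          exact hup i j (by omega) (by linarith) f2 (by linarith)
    · rintro ⟨⟨⟨i, hi⟩, ⟨j, hj⟩⟩, hk⟩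
      have fin : ∀ s t : ℝ, 0 ≤ s → 0 ≤ t → s + t ≤ n → X = P + s • v + t • w →
          ∃ s t : ℝ, 0 ≤ s ∧ 0 ≤ t ∧ s + t ≤ 1 ∧ X = P + s • (n : ℝ) • v + t • (n : ℝ) • w := by
        intro s t h1 h2 h3 hX
        refine ⟨s / n, t / n, by positivity, by positivity, ?_, ?_⟩
        · rw [← add_div, div_le_one hnR]; exact h3
        · rw [hX, smul_smul, smul_smul, div_mul_cancel₀ _ hnR.ne', div_mul_cancel₀ _ hnR.ne']
      dsimp only at hk
      split_ifs at hk with hij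
      · obtain ⟨s, t, h1, h2, h3, hX⟩ := (mem_up ..).1 hk
        have : (i:ℝ) + j + 1 ≤ n := by exact_mod_cast hij
        have : (0:ℝ) ≤ i := by positivity
        have : (0:ℝ) ≤ j := by positivity
        exact fin s t (by linarith) (by linarith) (by linarith) hX
      · obtain ⟨s, t, h1, h2, h3, hX⟩ := (mem_dn ..).1 hk
        have e : (n - 1 - i) + (n - 1 - j) + 2 ≤ n := by omega
        generalize n - 1 - i = i' at *
        generalize n - 1 - j = j' at *
        have : (i':ℝ) + j' + 2 ≤ n := by exact_mod_cast e
        exact fin s t (by linarith) (by linarith) (by linarith) hX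
  · rintro ⟨⟨i, hi⟩, ⟨j, hj⟩⟩ ⟨⟨i', hi'⟩, ⟨j', hj'⟩⟩ hne
    apply Set.eq_empty_of_forall_notMem
    rintro X ⟨h1, h2⟩
    simp only [ne_eq, Prod.mk.injEq, Fin.mk.injEq] at hne
    dsimp only at h1 h2
    split_ifs at h1 h2 with c1 c2 c2
    · obtain ⟨s, t, a1, a2, a3, hX⟩ := int_up hd h1
      obtain ⟨s', t', b1, b2, b3, hX'⟩ := int_up hd h2
      obtain ⟨rfl, rfl⟩ := coord_unique hd (hX.symm.trans hX')
      omega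
    · obtain ⟨s, t, a1, a2, a3, hX⟩ := int_up hd h1
      obtain ⟨s', t', b1, b2, b3, hX'⟩ := int_dn hd h2
      obtain ⟨rfl, rfl⟩ := coord_unique hd (hX.symm.trans hX')
      have e1 : n - 1 - i' = i := by omega
      have e2 : n - 1 - j' = j := by omega
      rw [e1, e2] at b3
      linarith
    · obtain ⟨s, t, a1, a2, a3, hX⟩ := int_dn hd h1
      obtain ⟨s', t', b1, b2, b3, hX'⟩ := int_up hd h2
      obtain ⟨rfl, rfl⟩ := coord_unique hd (hX.symm.trans hX')
      have e1 : n - 1 - i = i' := by omega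
      have e2 : n - 1 - j = j' := by omega
      rw [e1, e2] at a3
      linarith
    · obtain ⟨s, t, a1, a2, a3, hX⟩ := int_dn hd h1
      obtain ⟨s', t', b1, b2, b3, hX'⟩ := int_dn hd h2
      obtain ⟨rfl, rfl⟩ := coord_unique hd (hX.symm.trans hX')
      omega

lemma scaled_tri {a b c : ℝ} (ha : 0 < a) (hb : 0 < b) (hc : 0 < c)
    (h : c ^ 2 = a ^ 2 + b ^ 2 + a * b) (n : ℕ) (hn : 0 < n) {P Q R : Plane}
    (h1 : dist Q R = n * a) (h2 : dist P R = n * b) (h3 : dist P Q = n * c) :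
    Tl a b c (convexHull ℝ {P, Q, R}) (n ^ 2) := by
  have hnR : (0:ℝ) < n := by exact_mod_cast hn
  obtain ⟨v, hv⟩ : ∃ v, v = (n : ℝ)⁻¹ • (Q - P) := ⟨_, rfl⟩
  obtain ⟨w, hw⟩ : ∃ w, w = (n : ℝ)⁻¹ • (R - P) := ⟨_, rfl⟩
  have hQ : Q = P + (n : ℝ) • v := by
    rw [hv, smul_smul, mul_inv_cancel₀ hnR.ne']; module
  have hR : R = P + (n : ℝ) • w := by
    rw [hw, smul_smul, mul_inv_cancel₀ hnR.ne']; module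
  have nv : ‖v‖ = c := by
    rw [hQ, dist_self_add_right, norm_smul, Real.norm_of_nonneg hnR.le] at h3
    exact mul_left_cancel₀ hnR.ne' h3
  have nw : ‖w‖ = b := by
    rw [hR, dist_self_add_right, norm_smul, Real.norm_of_nonneg hnR.le] at h2
    exact mul_left_cancel₀ hnR.ne' h2
  have nvw : dist v w = a := by
    rw [hQ, hR, dist_add_left, dist_smul₀, Real.norm_of_nonneg hnR.le] at h1
    exact mul_left_cancel₀ hnR.ne' h1
  have e1 := dist_sq' v w
  have e2 := dist_sq' v 0
  have e3 := dist_sq' w 0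
  rw [nvw] at e1
  rw [dist_zero_right, nv] at e2
  rw [dist_zero_right, nw] at e3
  simp at e2 e3
  have hd : v 0 * w 1 - v 1 * w 0 ≠ 0 := by
    intro h0
    have hdot : v 0 * w 0 + v 1 * w 1 = (2 * b ^ 2 + a * b) / 2 := by
      linear_combination (e1 - e2 - e3 + h) / 2
    have : (v 0 * w 1 - v 1 * w 0) ^ 2 + (v 0 * w 0 + v 1 * w 1) ^ 2 = c ^ 2 * b ^ 2 := by
      rw [e2, e3]; ring
    rw [h0, hdot, h] at this
    have : (a * b) ^ 2 = 0 := by linear_combination (-4/3) * this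
    have : 0 < (a * b) ^ 2 := by positivity
    linarith
  have := scaled_tl (P := P) hd n hn
  rw [nvw, nv, nw, ← hQ, ← hR] at this
  exact this

lemma equi_isTriangle {X : ℝ} (hX : 0 ≤ X) : IsTriangle X X X (EquilateralTri X) := by
  have h3 : Real.sqrt 3 ^ 2 = 3 := Real.sq_sqrt (by norm_num)
  refine ⟨_, _, _, ?_, ?_, ?_, rfl⟩ <;> apply dist_of_sq hX <;> simp only [pt_zero, pt_one] <;>
    first | linear_combination X ^ 2 / 4 * h3 | ring

lemma perm3 (A B C : Plane) : ({A, B, C} : Set Plane) = {A, C, B} := by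
  rw [Set.pair_comm]

theorem stmt13 (a b c : ℕ) (ha : 0 < a) (hb : 0 < b) (hc : 0 < c)
    (hab : Nat.Coprime a b) (hac : Nat.Coprime a c) (hbc : Nat.Coprime b c)
    (h : c ^ 2 = a ^ 2 + b ^ 2 + a * b) (m : ℕ) (hm : 0 < m)
    (heq : TilesInto (EquilateralTri ((m : ℝ) * a * b)) (m ^ 2 * a * b) a b c) :
    ∀ Δ : Set Plane,
      IsTriangle ((m : ℝ) * b * c) ((m : ℝ) * b * c) ((m : ℝ) * b * (a + 2 * b)) Δ →
      TilesInto Δ (m ^ 2 * b * (a + 2 * b)) a b c := by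
  rintro Δ ⟨P, Q, R, h1, h2, h3, rfl⟩
  have haR : (0:ℝ) < a := by exact_mod_cast ha
  have hbR : (0:ℝ) < b := by exact_mod_cast hb
  have hcR : (0:ℝ) < c := by exact_mod_cast hc
  have hmR : (0:ℝ) < m := by exact_mod_cast hm
  have hR : (c:ℝ) ^ 2 = a ^ 2 + b ^ 2 + a * b := by exact_mod_cast h
  obtain ⟨D, hD⟩ : ∃ D, D = P + ((b:ℝ) / (a + 2 * b)) • (Q - P) := ⟨_, rfl⟩
  obtain ⟨E, hE⟩ : ∃ E, E = P + (((a:ℝ) + b) / (a + 2 * b)) • (Q - P) := ⟨_, rfl⟩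
  obtain ⟨l, hl⟩ : ∃ l, l = (b:ℝ) / (a + 2 * b) := ⟨_, rfl⟩
  have hs : (a:ℝ) + 2 * b ≠ 0 := by positivity
  have hlm : l * (a + 2 * b) = b := by rw [hl]; field_simp
  have hl' : ((a:ℝ) + b) / (a + 2 * b) = 1 - l := by rw [hl]; field_simp; ring
  rw [← hl] at hD
  rw [hl'] at hE
  have q1 := dist_sq' Q R
  have q2 := dist_sq' P R
  have q3 := dist_sq' P Q
  rw [h1] at q1
  rw [h2] at q2
  rw [h3] at q3
  have d0 : D 0 = P 0 + l * (Q 0 - P 0) := by rw [hD]; simp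
  have d1 : D 1 = P 1 + l * (Q 1 - P 1) := by rw [hD]; simp
  have e0 : E 0 = P 0 + (1 - l) * (Q 0 - P 0) := by rw [hE]; simp
  have e1 : E 1 = P 1 + (1 - l) * (Q 1 - P 1) := by rw [hE]; simp
  have hk : l * (1 - l) * (m * b * (a + 2 * b)) ^ 2 = (m * b : ℝ) ^ 2 * (b * (a + b)) := by
    have : (1 - l) * (a + 2 * b) = a + b := by linear_combination -hlm
    calc _ = (m * b : ℝ) ^ 2 * ((l * (a + 2 * b)) * ((1 - l) * (a + 2 * b))) := by ring
      _ = _ := by rw [hlm, this]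
  have DR : dist D R = m * a * b := by
    apply dist_of_sq (by positivity)
    rw [d0, d1]
    linear_combination -(1 - l) * q2 - l * q1 + l * (1 - l) * q3 - hk + (m * b : ℝ) ^ 2 * hR
  have ER : dist E R = m * a * b := by
    apply dist_of_sq (by positivity)
    rw [e0, e1]
    linear_combination -(1 - l) * q1 - l * q2 + l * (1 - l) * q3 - hk + (m * b : ℝ) ^ 2 * hR
  have PD : dist P D = m * b * b := by
    apply dist_of_sq (by positivity)
    rw [d0, d1]
    linear_combination -l ^ 2 * q3 + (m * b : ℝ) ^ 2 * (l * (a + 2 * b) + b) * hlm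
  have EQ : dist Q E = m * b * b := by
    apply dist_of_sq (by positivity)
    rw [e0, e1]
    linear_combination -l ^ 2 * q3 + (m * b : ℝ) ^ 2 * (l * (a + 2 * b) + b) * hlm
  have DE : dist D E = m * a * b := by
    apply dist_of_sq (by positivity)
    rw [d0, d1, e0, e1]
    linear_combination -(1 - 2 * l) ^ 2 * q3 -
      (m * b : ℝ) ^ 2 * ((1 - 2 * l) * (a + 2 * b) + a) * 2 * hlm
  have hl0 : 0 ≤ l := by rw [hl]; positivity
  have hl1 : l ≤ 1 := by rw [hl, div_le_one (by positivity)]; linarith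
  have T1 : Tl a b c (convexHull ℝ {P, D, R}) ((m * b) ^ 2) := by
    rw [perm3]
    apply scaled_tri haR hbR hcR hR (m * b) (by positivity) <;> push_cast
    · rw [dist_comm, DR]; ring
    · exact PD
    · exact h2
  have T3 : Tl a b c (convexHull ℝ {E, Q, R}) ((m * b) ^ 2) := by
    rw [show ({E, Q, R} : Set Plane) = {Q, R, E} by rw [Set.insert_comm, perm3]]
    apply scaled_tri haR hbR hcR hR (m * b) (by positivity) <;> push_cast
    · rw [dist_comm, ER]; ring
    · exact EQ
    · exact h1
  have T2 : Tl a b c (convexHull ℝ {D, E, R}) (m ^ 2 * a * b) := by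
    obtain ⟨f, hf⟩ := sss (by positivity) (equi_isTriangle (X := m * a * b) (by positivity))
      ⟨D, E, R, ER, DR, DE, rfl⟩
    rw [← hf]
    exact heq.tl.image f
  have T23 : Tl a b c (convexHull ℝ {D, Q, R}) (m ^ 2 * a * b + (m * b) ^ 2) := by
    refine split_tl (l := (a:ℝ) / (a + b)) (D := E) (by positivity) ?_ ?_
      (by rw [ER]; positivity) T2 T3
    · rw [div_le_one (by positivity)]; linarith
    · have : (a:ℝ) + b ≠ 0 := by positivity
      rw [hE, hD, hl]
      apply plane_ext <;> simp <;> field_simp <;> ring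
  have T := split_tl hl0 hl1 hD (by rw [DR]; positivity) T1 T23
  have := T.tilesInto hcR (by positivity)
  convert this using 1
  ring
end
end

section
/- Let a, b, c be pairwise coprime positive integers with c² = a² + b² + ab, and let m be a positive integer such that the equilateral triangle with side length m·ab tiles into m²·ab congruent copies of the triangle with side lengths (a, b, c). Then the triangle with side lengths (m·a·b, m·b·c, m·b·(a+b)) tiles into m²·b·(a+b) congruent copies of the triangle with side lengths (a, b, c). -/
noncomputable section

lemma ht_iso_image (f : Plane ≃ᵢ Plane) (A B C : Plane) :
    f '' convexHull ℝ {A, B, C} = convexHull ℝ {f A, f B, f C} := by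
  have h := (f.toRealAffineIsometryEquiv.toAffineEquiv.toAffineMap).image_convexHull {A, B, C}
  have e : ⇑(f.toRealAffineIsometryEquiv.toAffineEquiv.toAffineMap) = f := by
    ext x : 1
    simp
  rw [e] at h
  rw [h]
  simp [Set.image_insert_eq]

lemma ht_isTriangle_image (f : Plane ≃ᵢ Plane) {p q r : ℝ} {T : Set Plane}
    (hT : IsTriangle p q r T) : IsTriangle p q r (f '' T) := by
  obtain ⟨P, Q, R, h1, h2, h3, rfl⟩ := hT
  exact ⟨f P, f Q, f R, by rw [f.dist_eq, h1], by rw [f.dist_eq, h2], by rw [f.dist_eq, h3],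
    ht_iso_image f P Q R⟩

lemma ht_norm_comb (u v : Plane) (s t : ℝ) :
    ‖s • u + t • v‖ ^ 2 = s ^ 2 * ‖u‖ ^ 2 + s * t * (‖u‖ ^ 2 + ‖v‖ ^ 2 - ‖u - v‖ ^ 2)
      + t ^ 2 * ‖v‖ ^ 2 := by
  rw [norm_add_sq_real, norm_sub_sq_real, norm_smul, norm_smul, inner_smul_left, inner_smul_right,
    mul_pow, mul_pow, Real.norm_eq_abs, Real.norm_eq_abs, sq_abs, sq_abs]
  simp
  ring

lemma ht_dual (u v : Plane)
    (hD : 0 < 4 * ‖u‖ ^ 2 * ‖v‖ ^ 2 - (‖u‖ ^ 2 + ‖v‖ ^ 2 - ‖u - v‖ ^ 2) ^ 2) :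
    ∃ s t : Plane →L[ℝ] ℝ, s u = 1 ∧ s v = 0 ∧ t u = 0 ∧ t v = 1 ∧
      ∀ x, x = s x • u + t x • v := by
  have hu : 0 < ‖u‖ := by
    rcases (norm_nonneg u).eq_or_lt with h0 | h0
    · rw [← h0] at hD
      nlinarith [sq_nonneg (0 ^ 2 + ‖v‖ ^ 2 - ‖u - v‖ ^ 2)]
    · exact h0
  have hli : LinearIndependent ℝ ![u, v] := by
    rw [LinearIndependent.pair_iff]
    intro s t hst
    have h1 := ht_norm_comb u v s t
    rw [hst, norm_zero] at h1
    set K := ‖u‖ ^ 2 + ‖v‖ ^ 2 - ‖u - v‖ ^ 2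
    have h2 : (2 * s * ‖u‖ ^ 2 + t * K) ^ 2 + t ^ 2 * (4 * ‖u‖ ^ 2 * ‖v‖ ^ 2 - K ^ 2) = 0 := by
      linear_combination (-4 * ‖u‖ ^ 2) * h1
    have ht : t = 0 := by
      by_contra hne
      have : 0 < t ^ 2 := by positivity
      nlinarith [mul_pos this hD, sq_nonneg (2 * s * ‖u‖ ^ 2 + t * K)]
    refine ⟨?_, ht⟩
    subst ht
    rw [zero_smul, add_zero, smul_eq_zero] at hst
    rcases hst with h | h
    · exact h
    · rw [h, norm_zero] at hu; exact absurd hu (lt_irrefl _)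
  let B := basisOfLinearIndependentOfCardEqFinrank hli (by simp)
  have hB0 : B 0 = u := by simp [B]
  have hB1 : B 1 = v := by simp [B]
  refine ⟨LinearMap.toContinuousLinearMap (B.coord 0), LinearMap.toContinuousLinearMap (B.coord 1),
    ?_, ?_, ?_, ?_, ?_⟩
  · rw [← hB0]; simp
  · rw [← hB1]; simp
  · rw [← hB0]; simp
  · rw [← hB1]; simp
  · intro x
    have := B.sum_repr x
    rw [Fin.sum_univ_two, hB0, hB1] at this
    simpa using this.symm

lemma ht_sss (u v u' v' : Plane) (h1 : ‖u‖ = ‖u'‖) (h2 : ‖v‖ = ‖v'‖) (h3 : ‖u - v‖ = ‖u' - v'‖)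
    (hD : 0 < 4 * ‖u‖ ^ 2 * ‖v‖ ^ 2 - (‖u‖ ^ 2 + ‖v‖ ^ 2 - ‖u - v‖ ^ 2) ^ 2) :
    ∃ L : Plane ≃ₗᵢ[ℝ] Plane, L u = u' ∧ L v = v' := by
  obtain ⟨s, t, su, sv, tu, tv, hx⟩ := ht_dual u v hD
  let L0 : Plane →ₗ[ℝ] Plane := s.toLinearMap.smulRight u' + t.toLinearMap.smulRight v'
  have hL0 : ∀ x, L0 x = s x • u' + t x • v' := fun x => by simp [L0]
  have hn : ∀ x, ‖L0 x‖ = ‖x‖ := by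
    intro x
    have : ‖L0 x‖ ^ 2 = ‖x‖ ^ 2 := by
      conv_rhs => rw [hx x]
      rw [hL0, ht_norm_comb, ht_norm_comb, h1, h2, h3]
    exact (sq_eq_sq₀ (norm_nonneg _) (norm_nonneg _)).1 this
  let L1 : Plane →ₗᵢ[ℝ] Plane := ⟨L0, hn⟩
  refine ⟨L1.toLinearIsometryEquiv rfl, ?_, ?_⟩
  · change L0 u = u'
    rw [hL0, su, tu]; simp
  · change L0 v = v'
    rw [hL0, sv, tv]; simp

lemma ht_congr {p q r : ℝ} {A B : Set Plane}
    (hD : 0 < 4 * p ^ 2 * q ^ 2 - (p ^ 2 + q ^ 2 - r ^ 2) ^ 2)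
    (hA : IsTriangle p q r A) (hB : IsTriangle p q r B) :
    ∃ f : Plane ≃ᵢ Plane, f '' A = B := by
  obtain ⟨P, Q, R, h1, h2, h3, rfl⟩ := hA
  obtain ⟨P', Q', R', h1', h2', h3', rfl⟩ := hB
  rw [dist_eq_norm] at h1 h2 h1' h2'
  have e : ‖(Q - R) - (P - R)‖ = r := by
    rw [sub_sub_sub_cancel_right, ← dist_eq_norm, dist_comm, h3]
  have e' : ‖(Q' - R') - (P' - R')‖ = r := by
    rw [sub_sub_sub_cancel_right, ← dist_eq_norm, dist_comm, h3']
  obtain ⟨L, hL1, hL2⟩ := ht_sss (Q - R) (P - R) (Q' - R') (P' - R') (by rw [h1, h1'])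
    (by rw [h2, h2']) (by rw [e, e']) (by rw [h1, h2, e]; exact hD)
  let f : Plane ≃ᵢ Plane :=
    ((IsometryEquiv.subRight R).trans L.toIsometryEquiv).trans (IsometryEquiv.addRight R')
  have hf : ∀ x, f x = L (x - R) + R' := fun x => rfl
  refine ⟨f, ?_⟩
  rw [ht_iso_image, hf, hf, hf, hL1, hL2]
  simp

lemma ht_tiles_of {ι : Type*} [Fintype ι] {N : ℕ} {p q r : ℝ} {S : Set Plane} (T : ι → Set Plane)
    (hD : 0 < 4 * p ^ 2 * q ^ 2 - (p ^ 2 + q ^ 2 - r ^ 2) ^ 2)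
    (hcard : Fintype.card ι = N) (hN : 0 < N)
    (hT : ∀ i, IsTriangle p q r (T i)) (hS : S = ⋃ i, T i)
    (hdis : ∀ i j, i ≠ j → interior (T i) ∩ interior (T j) = ∅) : TilesInto S N p q r := by
  let e : Fin N ≃ ι := (Fintype.equivFinOfCardEq hcard).symm
  choose f hf using fun i : Fin N => ht_congr hD (hT (e ⟨0, hN⟩)) (hT (e i))
  refine ⟨f, T (e ⟨0, hN⟩), hT _, ?_, ?_⟩
  · simp_rw [hf, hS]
    exact (e.surjective.iUnion_comp T).symm
  · intro i j hij
    rw [hf, hf]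
    exact hdis _ _ (e.injective.ne hij)

lemma ht_mem_hull (A B C x : Plane) : x ∈ convexHull ℝ {A, B, C} ↔
    ∃ p q r : ℝ, 0 ≤ p ∧ 0 ≤ q ∧ 0 ≤ r ∧ p + q + r = 1 ∧ x = p • A + q • B + r • C := by
  constructor
  · intro hx
    let K : Set Plane := {x | ∃ p q r : ℝ, 0 ≤ p ∧ 0 ≤ q ∧ 0 ≤ r ∧ p + q + r = 1 ∧
      x = p • A + q • B + r • C}
    have hK : Convex ℝ K := by
      rintro y ⟨p, q, r, hp, hq, hr, h1, rfl⟩ z ⟨p', q', r', hp', hq', hr', h1', rfl⟩ s t hs ht hst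
      refine ⟨s * p + t * p', s * q + t * q', s * r + t * r', by positivity, by positivity,
        by positivity, ?_, ?_⟩
      · linear_combination s * h1 + t * h1' + hst
      · module
    have : convexHull ℝ {A, B, C} ⊆ K := by
      apply convexHull_min _ hK
      rintro y (rfl | rfl | rfl)
      · exact ⟨1, 0, 0, by norm_num, by norm_num, by norm_num, by norm_num, by simp⟩
      · exact ⟨0, 1, 0, by norm_num, by norm_num, by norm_num, by norm_num, by simp⟩
      · exact ⟨0, 0, 1, by norm_num, by norm_num, by norm_num, by norm_num, by simp⟩
    exact this hx
  · rintro ⟨p, q, r, hp, hq, hr, h1, rfl⟩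
    have hc := convex_convexHull ℝ ({A, B, C} : Set Plane)
    have := hc.sum_mem (t := Finset.univ) (w := ![p, q, r]) (z := ![A, B, C])
      (by intro i _; fin_cases i <;> simpa) (by simp [Fin.sum_univ_three, h1])
      (by intro i _; apply subset_convexHull; fin_cases i <;> simp)
    simpa [Fin.sum_univ_three] using this

lemma ht_interior (l : Plane →L[ℝ] ℝ) (hl : l ≠ 0) (c : ℝ) (T : Set Plane)
    (hT : ∀ x ∈ T, c ≤ l x) : ∀ x ∈ interior T, c < l x := by
  intro x hx
  have ho : IsOpen (l '' interior T) := (l.isOpenMap_of_ne_zero hl) _ isOpen_interior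
  have hsub : l '' interior T ⊆ interior (Set.Ici c) := by
    apply interior_maximal _ ho
    rintro _ ⟨y, hy, rfl⟩
    exact hT y (interior_subset hy)
  rw [interior_Ici] at hsub
  exact hsub ⟨x, hx, rfl⟩

/-- The triangle with corner `O + α u + β v` and signed size `ε`. -/
def htTri (O u v : Plane) (α β ε : ℝ) : Set Plane :=
  convexHull ℝ {O + α • u + (β + ε) • v, O + (α + ε) • u + β • v, O + α • u + β • v}

lemma ht_mem_tri (O u v : Plane) (s t : Plane →L[ℝ] ℝ) (su : s u = 1) (sv : s v = 0)
    (tu : t u = 0) (tv : t v = 1) (hst : ∀ x, x = s x • u + t x • v) (α β ε : ℝ) (hε : ε ≠ 0)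
    (x : Plane) : x ∈ htTri O u v α β ε ↔
      0 ≤ (s x - s O - α) * ε ∧ 0 ≤ (t x - t O - β) * ε ∧
        (s x - s O - α) * ε + (t x - t O - β) * ε ≤ ε ^ 2 := by
  have he2 : 0 < ε ^ 2 := by positivity
  rw [htTri, ht_mem_hull]
  constructor
  · rintro ⟨p, q, r, hp, hq, hr, h1, rfl⟩
    simp only [map_add, map_smul, su, sv, tu, tv, smul_eq_mul]
    have hr' : r = 1 - p - q := by linarith
    subst hr'
    refine ⟨?_, ?_, ?_⟩
    · have : 0 ≤ q * ε ^ 2 := by positivity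
      convert this using 1; ring
    · have : 0 ≤ p * ε ^ 2 := by positivity
      convert this using 1; ring
    · have : 0 ≤ (1 - p - q) * ε ^ 2 := by positivity
      rw [← sub_nonneg]
      convert this using 1; ring
  · rintro ⟨h1, h2, h3⟩
    refine ⟨(t x - t O - β) * ε / ε ^ 2, (s x - s O - α) * ε / ε ^ 2,
      (ε ^ 2 - ((s x - s O - α) * ε + (t x - t O - β) * ε)) / ε ^ 2, by positivity, by positivity,
      div_nonneg (by linarith) he2.le, by field_simp; ring, ?_⟩
    have e1 : (t x - t O - β) * ε / ε ^ 2 = (t x - t O - β) / ε := by field_simp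
    have e2 : (s x - s O - α) * ε / ε ^ 2 = (s x - s O - α) / ε := by field_simp
    have e3 : (ε ^ 2 - ((s x - s O - α) * ε + (t x - t O - β) * ε)) / ε ^ 2
      = 1 - (t x - t O - β) / ε - (s x - s O - α) / ε := by field_simp; ring
    rw [e1, e2, e3]
    obtain ⟨X, hX⟩ : ∃ X, X = (s x - s O - α) / ε := ⟨_, rfl⟩
    obtain ⟨Y, hY⟩ : ∃ Y, Y = (t x - t O - β) / ε := ⟨_, rfl⟩
    rw [← hX, ← hY]
    have hX' : s x = s O + α + X * ε := by rw [hX]; field_simp; ring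
    have hY' : t x = t O + β + Y * ε := by rw [hY]; field_simp; ring
    have hx := hst x
    rw [hX', hY'] at hx
    have hO := hst O
    rw [hx]
    generalize s O = sO at *
    generalize t O = tO at *
    rw [hO]
    module

lemma ht_int_tri (O u v : Plane) (s t : Plane →L[ℝ] ℝ) (su : s u = 1) (sv : s v = 0)
    (tu : t u = 0) (tv : t v = 1) (hst : ∀ x, x = s x • u + t x • v) (α β ε : ℝ) (hε : ε ≠ 0)
    (x : Plane) (hx : x ∈ interior (htTri O u v α β ε)) :
      0 < (s x - s O - α) * ε ∧ 0 < (t x - t O - β) * ε ∧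
        (s x - s O - α) * ε + (t x - t O - β) * ε < ε ^ 2 := by
  have key := ht_mem_tri O u v s t su sv tu tv hst α β ε hε
  have n1 : ε • s ≠ 0 := by
    intro h; apply hε; simpa [su] using DFunLike.congr_fun h u
  have n2 : ε • t ≠ 0 := by
    intro h; apply hε; simpa [tv] using DFunLike.congr_fun h v
  have n3 : -(ε • s + ε • t) ≠ 0 := by
    intro h; apply hε; simpa [su, tu] using DFunLike.congr_fun h u
  have i1 := ht_interior (ε • s) n1 ((s O + α) * ε) (htTri O u v α β ε)
    (by intro y hy; have := (key y).1 hy; simp; linarith) x hx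
  have i2 := ht_interior (ε • t) n2 ((t O + β) * ε) (htTri O u v α β ε)
    (by intro y hy; have := (key y).1 hy; simp; linarith) x hx
  have i3 := ht_interior (-(ε • s + ε • t)) n3 (-((s O + α) * ε + (t O + β) * ε + ε ^ 2))
    (htTri O u v α β ε)
    (by intro y hy; have := (key y).1 hy; simp; linarith) x hx
  simp at i1 i2 i3
  refine ⟨?_, ?_, ?_⟩ <;> linarith

lemma ht_tri_isTriangle (O u v : Plane) {p q r : ℝ} (hu : ‖u‖ = p) (hv : ‖v‖ = q)
    (huv : ‖u - v‖ = r) (α β ε : ℝ) :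
    IsTriangle (|ε| * p) (|ε| * q) (|ε| * r) (htTri O u v α β ε) := by
  refine ⟨_, _, _, ?_, ?_, ?_, rfl⟩
  · rw [dist_eq_norm, ← hu, ← Real.norm_eq_abs, ← norm_smul]
    congr 1; module
  · rw [dist_eq_norm, ← hv, ← Real.norm_eq_abs, ← norm_smul]
    congr 1; module
  · rw [dist_comm, dist_eq_norm, ← huv, ← Real.norm_eq_abs, ← norm_smul]
    congr 1; module

/-- Tiles of the standard `k²` tiling. -/
def htTile (O u v : Plane) (k : ℕ) (ij : Fin k × Fin k) : Set Plane :=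
  if (ij.1 : ℕ) + ij.2 < k then htTri O u v (ij.1 : ℕ) (ij.2 : ℕ) 1
  else htTri O u v ((k : ℝ) - (ij.1 : ℕ)) ((k : ℝ) - (ij.2 : ℕ)) (-1)

lemma ht_tile_isTriangle (O u v : Plane) {p q r : ℝ} (hu : ‖u‖ = p) (hv : ‖v‖ = q)
    (huv : ‖u - v‖ = r) (k : ℕ) (ij : Fin k × Fin k) : IsTriangle p q r (htTile O u v k ij) := by
  unfold htTile
  split_ifs
  · simpa using ht_tri_isTriangle O u v hu hv huv (ij.1 : ℕ) (ij.2 : ℕ) 1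
  · simpa using ht_tri_isTriangle O u v hu hv huv ((k : ℝ) - (ij.1 : ℕ)) ((k : ℝ) - (ij.2 : ℕ)) (-1)

lemma ht_cell {i j : ℤ} {x : ℝ} (h1 : (i : ℝ) < x) (h2 : x < i + 1) (h3 : (j : ℝ) < x)
    (h4 : x < j + 1) : i = j := by
  have a1 : (i : ℝ) < j + 1 := by linarith
  have a2 : (j : ℝ) < i + 1 := by linarith
  have b1 : i < j + 1 := by exact_mod_cast a1
  have b2 : j < i + 1 := by exact_mod_cast a2
  omega

lemma ht_tile_disj (O u v : Plane)
    (hD : 0 < 4 * ‖u‖ ^ 2 * ‖v‖ ^ 2 - (‖u‖ ^ 2 + ‖v‖ ^ 2 - ‖u - v‖ ^ 2) ^ 2)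
    (k : ℕ) (a b : Fin k × Fin k) (hne : a ≠ b) :
    interior (htTile O u v k a) ∩ interior (htTile O u v k b) = ∅ := by
  obtain ⟨s, t, su, sv, tu, tv, hst⟩ := ht_dual u v hD
  have key := ht_int_tri O u v s t su sv tu tv hst
  rw [Set.eq_empty_iff_forall_notMem]
  rintro x ⟨hx1, hx2⟩
  obtain ⟨⟨i, hi⟩, ⟨j, hj⟩⟩ := a
  obtain ⟨⟨i', hi'⟩, ⟨j', hj'⟩⟩ := b
  unfold htTile at hx1 hx2
  simp only at hx1 hx2
  have hne' : ¬ ((i : ℤ) = i' ∧ (j : ℤ) = j') := by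
    rintro ⟨h1, h2⟩
    apply hne
    have h1 : i = i' := by exact_mod_cast h1
    have h2 : j = j' := by exact_mod_cast h2
    subst h1 h2
    rfl
  split_ifs at hx1 hx2 with c1 c2 c2
  · have k1 := key _ _ 1 (by norm_num) x hx1
    have k2 := key _ _ 1 (by norm_num) x hx2
    apply hne'
    constructor
    · apply ht_cell (x := s x - s O) <;> push_cast <;> linarith
    · apply ht_cell (x := t x - t O) <;> push_cast <;> linarith
  · have k1 := key _ _ 1 (by norm_num) x hx1
    have k2 := key _ _ (-1) (by norm_num) x hx2
    have e1 : (i : ℤ) = k - i' - 1 := by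
      apply ht_cell (x := s x - s O) <;> push_cast <;> linarith
    have e2 : (j : ℤ) = k - j' - 1 := by
      apply ht_cell (x := t x - t O) <;> push_cast <;> linarith
    have e1' : (i : ℝ) = k - i' - 1 := by exact_mod_cast e1
    have e2' : (j : ℝ) = k - j' - 1 := by exact_mod_cast e2
    linarith
  · have k1 := key _ _ (-1) (by norm_num) x hx1
    have k2 := key _ _ 1 (by norm_num) x hx2
    have e1 : (i' : ℤ) = k - i - 1 := by
      apply ht_cell (x := s x - s O) <;> push_cast <;> linarith
    have e2 : (j' : ℤ) = k - j - 1 := by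
      apply ht_cell (x := t x - t O) <;> push_cast <;> linarith
    have e1' : (i' : ℝ) = k - i - 1 := by exact_mod_cast e1
    have e2' : (j' : ℝ) = k - j - 1 := by exact_mod_cast e2
    linarith
  · have k1 := key _ _ (-1) (by norm_num) x hx1
    have k2 := key _ _ (-1) (by norm_num) x hx2
    have e1 : (k : ℤ) - i - 1 = k - i' - 1 := by
      apply ht_cell (x := s x - s O) <;> push_cast <;> linarith
    have e2 : (k : ℤ) - j - 1 = k - j' - 1 := by
      apply ht_cell (x := t x - t O) <;> push_cast <;> linarith
    apply hne'
    constructor <;> linarith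

lemma ht_tile_union (O u v : Plane)
    (hD : 0 < 4 * ‖u‖ ^ 2 * ‖v‖ ^ 2 - (‖u‖ ^ 2 + ‖v‖ ^ 2 - ‖u - v‖ ^ 2) ^ 2)
    (k : ℕ) (hk : 0 < k) : htTri O u v 0 0 k = ⋃ ij, htTile O u v k ij := by
  obtain ⟨s, t, su, sv, tu, tv, hst⟩ := ht_dual u v hD
  have key := ht_mem_tri O u v s t su sv tu tv hst
  have hk' : (0 : ℝ) < k := by exact_mod_cast hk
  ext x
  rw [key _ _ _ hk'.ne', Set.mem_iUnion]
  constructor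
  · rintro ⟨h1, h2, h3⟩
    have X0 : 0 ≤ s x - s O := by simpa using nonneg_of_mul_nonneg_left h1 hk'
    have Y0 : 0 ≤ t x - t O := by simpa using nonneg_of_mul_nonneg_left h2 hk'
    have XY : (s x - s O) + (t x - t O) ≤ k := by
      by_contra hlt
      push Not at hlt
      nlinarith
    have fx := Nat.floor_le X0
    have fx' := Nat.lt_floor_add_one (s x - s O)
    have fy := Nat.floor_le Y0
    have fy' := Nat.lt_floor_add_one (t x - t O)
    have up : ∀ i j : ℕ, i + j < k → (i : ℝ) ≤ s x - s O → (j : ℝ) ≤ t x - t O →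
        (s x - s O) + (t x - t O) ≤ i + j + 1 → ∃ ij, x ∈ htTile O u v k ij := by
      intro i j hij a1 a2 a3
      refine ⟨(⟨i, by omega⟩, ⟨j, by omega⟩), ?_⟩
      unfold htTile
      rw [if_pos hij, key _ _ _ one_ne_zero]
      refine ⟨?_, ?_, ?_⟩ <;> simp only [] <;> linarith
    generalize ⌊s x - s O⌋₊ = i at *
    generalize ⌊t x - t O⌋₊ = j at *
    have hij : i + j ≤ k := by
      have : (i : ℝ) + j ≤ k := by linarith
      exact_mod_cast this
    rcases lt_or_ge (i + j) k with hlt | hge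
    · rcases le_or_gt ((s x - s O) + (t x - t O)) (i + j + 1) with hle | hgt
      · exact up i j hlt fx fy hle
      · have hlt2 : i + j + 1 < k := by
          have : (i : ℝ) + j + 1 < k := by linarith
          exact_mod_cast this
        refine ⟨(⟨k - 1 - i, by omega⟩, ⟨k - 1 - j, by omega⟩), ?_⟩
        unfold htTile
        rw [if_neg (by simp only []; omega), key _ _ _ (by norm_num)]
        have e1 : ((k - 1 - i : ℕ) : ℝ) = k - 1 - i := by
          rw [Nat.cast_sub (by omega), Nat.cast_sub (by omega)]; simp
        have e2 : ((k - 1 - j : ℕ) : ℝ) = k - 1 - j := by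
          rw [Nat.cast_sub (by omega), Nat.cast_sub (by omega)]; simp
        simp only [e1, e2]
        refine ⟨?_, ?_, ?_⟩ <;> linarith
    · have hk2 : i + j = k := le_antisymm hij hge
      have hk3 : (i : ℝ) + j = k := by exact_mod_cast hk2
      rcases i with _ | i
      · rcases j with _ | j
        · omega
        · push_cast at *
          apply up 0 j (by omega) <;> push_cast <;> linarith
      · push_cast at *
        apply up i j (by omega) <;> linarith
  · rintro ⟨⟨⟨i, hi⟩, ⟨j, hj⟩⟩, hx⟩
    unfold htTile at hx
    simp only at hx
    have hi1 : (i : ℝ) + 1 ≤ k := by exact_mod_cast hi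
    have hj1 : (j : ℝ) + 1 ≤ k := by exact_mod_cast hj
    have i0 : (0 : ℝ) ≤ i := Nat.cast_nonneg i
    have j0 : (0 : ℝ) ≤ j := Nat.cast_nonneg j
    suffices hs : 0 ≤ s x - s O ∧ 0 ≤ t x - t O ∧ (s x - s O) + (t x - t O) ≤ k by
      obtain ⟨a1, a2, a3⟩ := hs
      refine ⟨by rw [sub_zero]; positivity, by rw [sub_zero]; positivity, ?_⟩
      nlinarith
    split_ifs at hx with c
    · rw [key _ _ _ one_ne_zero] at hx
      have c' : (i : ℝ) + j + 1 ≤ k := by exact_mod_cast c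
      refine ⟨?_, ?_, ?_⟩ <;> linarith
    · rw [key _ _ _ (by norm_num)] at hx
      have c' : (k : ℝ) ≤ i + j := by exact_mod_cast (not_lt.1 c)
      refine ⟨?_, ?_, ?_⟩ <;> linarith

lemma ht_split (P Q R S : Plane) (l : ℝ) (h0 : 0 < l) (h1 : l < 1)
    (hS : S = (1 - l) • Q + l • P) :
    convexHull ℝ {P, Q, R} = convexHull ℝ {Q, R, S} ∪ convexHull ℝ {P, R, S} := by
  have hl : 0 < 1 - l := by linarith
  ext x
  rw [Set.mem_union, ht_mem_hull, ht_mem_hull, ht_mem_hull]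
  constructor
  · rintro ⟨p, q, r, hp, hq, hr, hs, rfl⟩
    rcases le_total ((1 - l) * p) (l * q) with hc | hc
    · left
      refine ⟨q - (1 - l) * p / l, r, p / l, ?_, hr, by positivity, ?_, ?_⟩
      · rw [sub_nonneg, div_le_iff₀ h0]; linarith
      · field_simp; linear_combination l * hs
      · obtain ⟨z, rfl⟩ : ∃ z, p = l * z := ⟨p / l, by field_simp⟩
        have e1 : (1 - l) * (l * z) / l = (1 - l) * z := by field_simp
        have e2 : l * z / l = z := by field_simp
        rw [hS, e1, e2]; module
    · right
      refine ⟨p - l * q / (1 - l), r, q / (1 - l), ?_, hr, by positivity, ?_, ?_⟩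
      · rw [sub_nonneg, div_le_iff₀ hl]; linarith
      · field_simp; linear_combination (1 - l) * hs
      · obtain ⟨z, rfl⟩ : ∃ z, q = (1 - l) * z := ⟨q / (1 - l), by field_simp⟩
        have e1 : l * ((1 - l) * z) / (1 - l) = l * z := by field_simp
        have e2 : (1 - l) * z / (1 - l) = z := by field_simp
        rw [hS, e1, e2]; module
  · rintro (⟨q, r, s, hq, hr, hs, hsum, rfl⟩ | ⟨p, r, s, hp, hr, hs, hsum, rfl⟩)
    · refine ⟨s * l, q + s * (1 - l), r, by positivity, by positivity, hr, ?_, ?_⟩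
      · linear_combination hsum
      · rw [hS]; module
    · refine ⟨p + s * l, s * (1 - l), r, by positivity, by positivity, hr, ?_, ?_⟩
      · linear_combination hsum
      · rw [hS]; module

lemma ht_dist_pt (x y x' y' d : ℝ) (hd : 0 ≤ d) (h : (x - x') ^ 2 + (y - y') ^ 2 = d ^ 2) :
    dist (pt x y) (pt x' y') = d := by
  rw [EuclideanSpace.dist_eq, Fin.sum_univ_two]
  simp [pt, Real.dist_eq, sq_abs, h, Real.sqrt_sq hd]

lemma ht_equi (X : ℝ) (hX : 0 ≤ X) : IsTriangle X X X (EquilateralTri X) := by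
  have h3 : Real.sqrt 3 ^ 2 = 3 := Real.sq_sqrt (by norm_num)
  refine ⟨_, _, _, ?_, ?_, ?_, rfl⟩ <;> apply ht_dist_pt _ _ _ _ _ hX
  · linear_combination X ^ 2 / 4 * h3
  · linear_combination X ^ 2 / 4 * h3
  · ring

set_option maxHeartbeats 1000000

theorem stmt15 (a b c : ℕ) (ha : 0 < a) (hb : 0 < b) (hc : 0 < c)
    (hab : Nat.Coprime a b) (hac : Nat.Coprime a c) (hbc : Nat.Coprime b c)
    (h : c ^ 2 = a ^ 2 + b ^ 2 + a * b) (m : ℕ) (hm : 0 < m)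
    (heq : TilesInto (EquilateralTri ((m : ℝ) * a * b)) (m ^ 2 * a * b) a b c) :
    ∀ Δ : Set Plane,
      IsTriangle ((m : ℝ) * a * b) ((m : ℝ) * b * c) ((m : ℝ) * b * (a + b)) Δ →
      TilesInto Δ (m ^ 2 * b * (a + b)) a b c := by
  intro Δ hΔ
  obtain ⟨P, Q, R, hQR, hPR, hPQ, rfl⟩ := hΔ
  have hA : (0 : ℝ) < a := by exact_mod_cast ha
  have hB : (0 : ℝ) < b := by exact_mod_cast hb
  have hM : (0 : ℝ) < m := by exact_mod_cast hm
  have hcr : (c : ℝ) ^ 2 = (a : ℝ) ^ 2 + (b : ℝ) ^ 2 + a * b := by exact_mod_cast h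
  have hDabc : (0 : ℝ) < 4 * (a : ℝ) ^ 2 * (b : ℝ) ^ 2
      - ((a : ℝ) ^ 2 + (b : ℝ) ^ 2 - (c : ℝ) ^ 2) ^ 2 := by
    rw [hcr]
    have : (0 : ℝ) < 3 * (a : ℝ) ^ 2 * (b : ℝ) ^ 2 := by positivity
    convert this using 1; ring
  obtain ⟨l, hl⟩ : ∃ l : ℝ, l = a / (a + b) := ⟨_, rfl⟩
  have hl0 : 0 < l := by rw [hl]; positivity
  have hl1 : l < 1 := by rw [hl, div_lt_one (by positivity)]; linarith
  obtain ⟨S, hS⟩ : ∃ S, S = (1 - l) • Q + l • P := ⟨_, rfl⟩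
  obtain ⟨k, hk⟩ : ∃ k : ℕ, k = m * b := ⟨_, rfl⟩
  have hk0 : 0 < k := by rw [hk]; positivity
  have hkr : (k : ℝ) = m * b := by rw [hk]; push_cast; ring
  have hkp : (0 : ℝ) < k := by exact_mod_cast hk0
  obtain ⟨u, hu⟩ : ∃ u : Plane, u = (k : ℝ)⁻¹ • (R - S) := ⟨_, rfl⟩
  obtain ⟨v, hv⟩ : ∃ v : Plane, v = (k : ℝ)⁻¹ • (P - S) := ⟨_, rfl⟩
  have hRS : R = S + (k : ℝ) • u := by rw [hu, smul_inv_smul₀ hkp.ne']; abel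
  have hPS : P = S + (k : ℝ) • v := by rw [hv, smul_inv_smul₀ hkp.ne']; abel
  have hz : ‖R - Q‖ = m * a * b := by rw [← hQR, dist_comm, dist_eq_norm]
  have hw : ‖P - Q‖ = m * b * (a + b) := by rw [← hPQ, dist_eq_norm]
  have hzw : ‖(R - Q) - (P - Q)‖ = m * b * c := by
    rw [sub_sub_sub_cancel_right, ← hPR, dist_comm, dist_eq_norm]
  have dSQ : dist S Q = m * a * b := by
    have : S - Q = l • (P - Q) := by rw [hS]; module
    rw [dist_eq_norm, this, norm_smul, hw, Real.norm_of_nonneg hl0.le, hl]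
    field_simp
  have nPS : ‖P - S‖ = m * b * b := by
    have : P - S = (1 - l) • (P - Q) := by rw [hS]; module
    rw [this, norm_smul, hw, Real.norm_of_nonneg (by linarith), hl]
    field_simp
    ring
  have nRS : ‖R - S‖ = m * a * b := by
    have e : R - S = (1 : ℝ) • (R - Q) + (-l) • (P - Q) := by rw [hS]; module
    have h2 := ht_norm_comb (R - Q) (P - Q) 1 (-l)
    rw [← e, hz, hw, hzw] at h2
    have h3 : l * (a + b) = a := by rw [hl]; field_simp
    have h4 : ‖R - S‖ ^ 2 = (m * a * b) ^ 2 := by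
      rw [h2, mul_pow _ (c : ℝ), hcr]
      linear_combination ((m : ℝ) * b) ^ 2 * (l * (a + b)) * h3
    exact (sq_eq_sq₀ (norm_nonneg _) (by positivity)).1 h4
  have nu : ‖u‖ = a := by
    rw [hu, norm_smul, nRS, Real.norm_of_nonneg (by positivity), hkr]
    field_simp
  have nv : ‖v‖ = b := by
    rw [hv, norm_smul, nPS, Real.norm_of_nonneg (by positivity), hkr]
    field_simp
  have nuv : ‖u - v‖ = c := by
    have : u - v = (k : ℝ)⁻¹ • ((R - Q) - (P - Q)) := by rw [hu, hv]; module
    rw [this, norm_smul, hzw, Real.norm_of_nonneg (by positivity), hkr]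
    field_simp
  have hD : 0 < 4 * ‖u‖ ^ 2 * ‖v‖ ^ 2 - (‖u‖ ^ 2 + ‖v‖ ^ 2 - ‖u - v‖ ^ 2) ^ 2 := by
    rw [nu, nv, nuv]; exact hDabc
  obtain ⟨s, t, su, sv, tu, tv, hst⟩ := ht_dual u v hD
  have htne : t ≠ 0 := by
    rintro rfl; simp at tv
  have htne' : -t ≠ 0 := neg_ne_zero.2 htne
  -- the second part
  have hbig : convexHull ℝ {P, R, S} = htTri S u v 0 0 k := by
    rw [htTri, hRS, hPS]; simp
  -- separation
  have hQt : t Q ≤ t S := by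
    have hw2 : t S = (1 - l) * t Q + l * t P := by rw [hS]; simp
    have hP2 : t P = t S + k := by rw [hPS]; simp [tv]
    have h5 : (1 - l) * t Q = (1 - l) * t S - l * k := by rw [hP2] at hw2; linear_combination -hw2
    have h6 : 0 < l * k := by positivity
    by_contra hcon
    push Not at hcon
    nlinarith
  have hRt : t R = t S := by rw [hRS]; simp [tu]
  have side1 : ∀ x ∈ convexHull ℝ {Q, R, S}, -t S ≤ (-t) x := by
    intro x hx
    rw [ht_mem_hull] at hx
    obtain ⟨p, q, r, hp, hq, hr, hsum, rfl⟩ := hx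
    simp only [neg_apply, map_add, map_smul, smul_eq_mul, hRt]
    have : r = 1 - p - q := by linarith
    subst this
    linarith [mul_le_mul_of_nonneg_left hQt hp]
  have side2 : ∀ x ∈ convexHull ℝ {P, R, S}, t S ≤ t x := by
    intro x hx
    rw [hbig, ht_mem_tri S u v s t su sv tu tv hst _ _ _ hkp.ne'] at hx
    have := nonneg_of_mul_nonneg_left hx.2.1 hkp
    linarith
  -- the equilateral part
  have hX : (0 : ℝ) < m * a * b := by positivity
  have hE : IsTriangle ((m : ℝ) * a * b) (m * a * b) (m * a * b) (convexHull ℝ {Q, R, S}) :=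
    ⟨Q, R, S, by rw [dist_eq_norm, nRS], by rw [dist_comm, dSQ], hQR, rfl⟩
  obtain ⟨g, hg⟩ := ht_congr (by
    have : 0 < 3 * ((m : ℝ) * a * b) ^ 4 := by positivity
    convert this using 1; ring) (ht_equi _ hX.le) hE
  obtain ⟨f, Δ₀, hΔ₀, hcov, hdisj⟩ := heq
  let T : Fin (m ^ 2 * a * b) ⊕ (Fin k × Fin k) → Set Plane :=
    Sum.elim (fun i => g '' (f i '' Δ₀)) (htTile S u v k)
  have hU1 : convexHull ℝ {Q, R, S} = ⋃ i, g '' (f i '' Δ₀) := by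
    rw [← hg, hcov, Set.image_iUnion]
  have hU2 : convexHull ℝ {P, R, S} = ⋃ i, htTile S u v k i := by
    rw [hbig]; exact ht_tile_union S u v hD k hk0
  have cross : ∀ i j, interior (g '' (f i '' Δ₀)) ∩ interior (htTile S u v k j) = ∅ := by
    intro i j
    rw [Set.eq_empty_iff_forall_notMem]
    rintro x ⟨hx1, hx2⟩
    have hx1' : x ∈ interior (convexHull ℝ {Q, R, S}) := by
      refine interior_mono ?_ hx1
      rw [hU1]; exact Set.subset_iUnion (fun i => g '' (f i '' Δ₀)) i
    have hx2' : x ∈ interior (convexHull ℝ {P, R, S}) := by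
      refine interior_mono ?_ hx2
      rw [hU2]; exact Set.subset_iUnion (fun i => htTile S u v k i) j
    have y1 := ht_interior (-t) htne' _ _ side1 x hx1'
    have y2 := ht_interior t htne _ _ side2 x hx2'
    simp at y1
    linarith
  refine ht_tiles_of T hDabc ?_ (by positivity) ?_ ?_ ?_
  · simp [hk]; ring
  · rintro (i | j)
    · exact ht_isTriangle_image g (ht_isTriangle_image (f i) hΔ₀)
    · exact ht_tile_isTriangle S u v nu nv nuv k j
  · rw [ht_split P Q R S l hl0 hl1 hS, hU1, hU2, Set.iUnion_sum]
    rfl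
  · rintro (i | i) (j | j) hij
    · have hne : i ≠ j := fun e => hij (by rw [e])
      change interior (g '' (f i '' Δ₀)) ∩ interior (g '' (f j '' Δ₀)) = ∅
      have e : ∀ W : Set Plane, interior (g '' W) = g '' interior W := fun W =>
        (g.toHomeomorph.image_interior W).symm
      rw [e, e, ← Set.image_inter g.injective, hdisj i j hne, Set.image_empty]
    · exact cross i j
    · rw [Set.inter_comm]; exact cross j i
    · exact ht_tile_disj S u v hD k i j (fun e => hij (by rw [e]))
end
end
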